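/- arXiv:2412.00995 — 2 statements merged into one kernel-verified Lean document; each statement's English description precedes it below -/
import Mathlib

section
/- There is an absolute constant C such that the following holds for every prime p, every integer k ≥ 1, every unit u ∈ ℤ_p^×, and every integer 0 ≤ ℓ ≤ 2k. Writing ν_a(χ_{p^{2k}}) for the Haar probability measure in V_a(ℤ_p) of {f ∈ V_a(ℤ_p) : p^{2k} ∣ Δ(f)}: ν_u(χ_{p²}) ≤ C p^{−2}; ν_{up}(χ_{p²}) ≤ C p^{−2}; ν_{up²}(χ_{p²}) ≤ C p^{−1}; ν_{up^ℓ}(χ_{p⁴}) ≤ C p^{−(4−ℓ)}; and for k ≥ 3, ν_{up^ℓ}(χ_{p^{2k}}) ≤ C min(k p^{ℓ−3k/2}, 1). -/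
noncomputable section

namespace BQPaper

/-- A binary quartic form `a x⁴ + b x³y + c x²y² + d xy³ + e y⁴` over `R`,
recorded by its coefficients. -/
structure BQ (R : Type*) where
  a : R
  b : R
  c : R
  d : R
  e : R

/-- A 2×2 matrix `!![p, q; r, s]`, recorded by its entries. -/
structure Mat2 (R : Type*) where
  p : R
  q : R
  r : R
  s : R

variable {R S : Type*} [CommRing R] [CommRing S]

def Mat2.det (m : Mat2 R) : R := m.p * m.s - m.q * m.r

/-- Matrix product. -/
def Mat2.mul (m n : Mat2 R) : Mat2 R :=
  ⟨m.p * n.p + m.q * n.r, m.p * n.q + m.q * n.s,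
   m.r * n.p + m.s * n.r, m.r * n.q + m.s * n.s⟩

/-- Scalar multiple of a matrix. -/
def Mat2.smul (z : R) (m : Mat2 R) : Mat2 R := ⟨z * m.p, z * m.q, z * m.r, z * m.s⟩

def Mat2.map (φ : R →+* S) (m : Mat2 R) : Mat2 S := ⟨φ m.p, φ m.q, φ m.r, φ m.s⟩

/-- Evaluation of a binary quartic form at `(x, y)`. -/
def BQ.eval (f : BQ R) (x y : R) : R :=
  f.a * x ^ 4 + f.b * x ^ 3 * y + f.c * x ^ 2 * y ^ 2 + f.d * x * y ^ 3 + f.e * y ^ 4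

/-- The invariant `I(f) = 12ae − 3bd + c²`. -/
def BQ.invI (f : BQ R) : R := 12 * f.a * f.e - 3 * f.b * f.d + f.c ^ 2

/-- The invariant `J(f) = 72ace + 9bcd − 27ad² − 27eb² − 2c³`. -/
def BQ.invJ (f : BQ R) : R :=
  72 * f.a * f.c * f.e + 9 * f.b * f.c * f.d - 27 * f.a * f.d ^ 2
    - 27 * f.e * f.b ^ 2 - 2 * f.c ^ 3

/-- The discriminant of a binary quartic form; one has `Δ = (4I³ − J²)/27`. -/
def BQ.disc (f : BQ R) : R :=
  256 * f.a ^ 3 * f.e ^ 3 - 192 * f.a ^ 2 * f.b * f.d * f.e ^ 2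
    - 128 * f.a ^ 2 * f.c ^ 2 * f.e ^ 2 + 144 * f.a ^ 2 * f.c * f.d ^ 2 * f.e
    - 27 * f.a ^ 2 * f.d ^ 4 + 144 * f.a * f.b ^ 2 * f.c * f.e ^ 2
    - 6 * f.a * f.b ^ 2 * f.d ^ 2 * f.e - 80 * f.a * f.b * f.c ^ 2 * f.d * f.e
    + 18 * f.a * f.b * f.c * f.d ^ 3 + 16 * f.a * f.c ^ 4 * f.e
    - 4 * f.a * f.c ^ 3 * f.d ^ 2 - 27 * f.b ^ 4 * f.e ^ 2
    + 18 * f.b ^ 3 * f.c * f.d * f.e - 4 * f.b ^ 3 * f.d ^ 3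
    - 4 * f.b ^ 2 * f.c ^ 3 * f.e + f.b ^ 2 * f.c ^ 2 * f.d ^ 2

/-- Multiplication of all coefficients of a form by a scalar. -/
def BQ.rsmul (t : R) (f : BQ R) : BQ R := ⟨t * f.a, t * f.b, t * f.c, t * f.d, t * f.e⟩

/-- Substitution action of a 2×2 matrix on binary quartic forms:
`(m • f)(x,y) = f((x,y)·m) = f(px + ry, qx + sy)` for `m = !![p, q; r, s]`. -/
def BQ.subst (m : Mat2 R) (f : BQ R) : BQ R where
  a := f.a * m.p ^ 4 + f.b * m.p ^ 3 * m.q + f.c * m.p ^ 2 * m.q ^ 2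
      + f.d * m.p * m.q ^ 3 + f.e * m.q ^ 4
  b := 4 * f.a * m.p ^ 3 * m.r + f.b * m.p ^ 3 * m.s + 3 * f.b * m.p ^ 2 * m.q * m.r
      + 2 * f.c * m.p ^ 2 * m.q * m.s + 2 * f.c * m.p * m.q ^ 2 * m.r
      + 3 * f.d * m.p * m.q ^ 2 * m.s + f.d * m.q ^ 3 * m.r + 4 * f.e * m.q ^ 3 * m.s
  c := 6 * f.a * m.p ^ 2 * m.r ^ 2 + 3 * f.b * m.p ^ 2 * m.r * m.s
      + 3 * f.b * m.p * m.q * m.r ^ 2 + f.c * m.p ^ 2 * m.s ^ 2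
      + 4 * f.c * m.p * m.q * m.r * m.s + f.c * m.q ^ 2 * m.r ^ 2
      + 3 * f.d * m.p * m.q * m.s ^ 2 + 3 * f.d * m.q ^ 2 * m.r * m.s
      + 6 * f.e * m.q ^ 2 * m.s ^ 2
  d := 4 * f.a * m.p * m.r ^ 3 + 3 * f.b * m.p * m.r ^ 2 * m.s + f.b * m.q * m.r ^ 3
      + 2 * f.c * m.p * m.r * m.s ^ 2 + 2 * f.c * m.q * m.r ^ 2 * m.s
      + f.d * m.p * m.s ^ 3 + 3 * f.d * m.q * m.r * m.s ^ 2 + 4 * f.e * m.q * m.s ^ 3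
  e := f.a * m.r ^ 4 + f.b * m.r ^ 3 * m.s + f.c * m.r ^ 2 * m.s ^ 2
      + f.d * m.r * m.s ^ 3 + f.e * m.s ^ 4

/-- The twisted action `(γ·f)(x,y) = f((x,y)·γ)/det(γ)²`, which descends to `PGL₂`.
(`Ring.inverse` is the genuine inverse when `det` is a unit.) -/
def BQ.twist (m : Mat2 R) (f : BQ R) : BQ R :=
  BQ.rsmul (Ring.inverse m.det ^ 2) (f.subst m)

/-- Coefficientwise map of forms along a ring homomorphism. -/
def BQ.map (φ : R →+* S) (f : BQ R) : BQ S := ⟨φ f.a, φ f.b, φ f.c, φ f.d, φ f.e⟩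

end BQPaper

namespace BQPaper

open MeasureTheory

instance (p : Nat.Primes) : Fact (p : ℕ).Prime := ⟨p.2⟩

noncomputable instance (p : ℕ) [Fact p.Prime] : MeasurableSpace ℤ_[p] := borel _
instance (p : ℕ) [Fact p.Prime] : BorelSpace ℤ_[p] := ⟨rfl⟩

/-- A binary quartic form with leading coefficient `a` and remaining coefficients
given by a vector: an element of `V_a(ℤ_p) ≅ ℤ_p⁴`. -/
def ofVecA {R : Type*} (a : R) (v : Fin 4 → R) : BQ R := ⟨a, v 0, v 1, v 2, v 3⟩

/-- The subset of `V_a(ℤ_p) ≅ ℤ_p⁴` of forms whose discriminant is divisible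
by `p^j`. -/
def discDivSetA (p : Nat.Primes) (a : ℤ_[(p : ℕ)]) (j : ℕ) : Set (Fin 4 → ℤ_[(p : ℕ)]) :=
  {v | ((p : ℕ) : ℤ_[(p : ℕ)]) ^ j ∣ (ofVecA a v).disc}

/-!
Uniqueness of Haar measure replaces `ν` by the product of four copies of the Haar measure of `ℤ_p`.
The seminvariants `H = 8ac - 3b²` and `R = 8a²d + b³ - 4abc` satisfy the syzygy `27R² + H³ - 48a²HI
= -64a³J`. For fixed `(b, c, d)` the invariant `I` is affine in `e`, with slope `12a`, so up to a
factor `12 / ‖a‖` it suffices to measure the `(b, c, d, I)` for which the syzygy holds for some `J`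
with `‖4I³ - J²‖ ≤ p⁻²ᵏ`. If `‖I‖³` is about `p⁻²ᵏ` or smaller, then `J` is small and `H³` dominates
the rest of the cubic in `H` unless `H` is small. Otherwise `I = α²` is itself a square with `J`
close to `± 2α³`, and the cubic degenerates to `(H ∓ 4aα)²(H ± 8aα)`. In both cases one solves for
`R` by the estimate for the measure of an approximate square root; integrating the result over `H`
produces a logarithm, whence the factor `k`, and summing over the layers of constant `‖α‖` produces
the exponent `3k/2`.

When `p ∣ a`, the discriminant modulo `p²` is quadratic in `e`, with leading coefficient a unit if
`p ∤ b`; completing the square, and separating the cases according to which of `b`, `c` and the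
discriminant of this quadratic are divisible by `p`, gives the bounds for `χ_{p²}` with `a = up` and
`a = up²`.
-/

section

open Set

variable {p : ℕ} [Fact p.Prime]

section Norm

lemma dvd_iff_norm_le {c x : ℤ_[p]} : c ∣ x ↔ ‖x‖ ≤ ‖c‖ := by
  rcases eq_or_ne c 0 with rfl | hc
  · simp
  rw [PadicInt.norm_eq_zpow_neg_valuation hc, PadicInt.norm_le_pow_iff_mem_span_pow,
    Ideal.mem_span_singleton]
  conv_lhs => rw [PadicInt.unitCoeff_spec hc, (Units.isUnit _).mul_left_dvd]

lemma pow_dvd_iff_norm_le {n : ℕ} {x : ℤ_[p]} :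
    (p : ℤ_[p]) ^ n ∣ x ↔ ‖x‖ ≤ (p : ℝ) ^ (-n : ℤ) := by
  rw [dvd_iff_norm_le, PadicInt.norm_p_pow]

lemma inv_le_norm_natCast {n : ℕ} (hn : n ≠ 0) : (n : ℝ)⁻¹ ≤ ‖(n : ℤ_[p])‖ := by
  have hn' : (n : ℤ_[p]) ≠ 0 := by exact_mod_cast hn
  rw [PadicInt.norm_eq_zpow_neg_valuation hn', zpow_neg, zpow_natCast]
  have hdvd : p ^ (n : ℤ_[p]).valuation ∣ n := by
    have h : (p : ℤ_[p]) ^ (n : ℤ_[p]).valuation ∣ ((n : ℤ) : ℤ_[p]) := by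
      rw [pow_dvd_iff_norm_le, Int.cast_natCast, PadicInt.norm_eq_zpow_neg_valuation hn']
    rw [PadicInt.pow_p_dvd_int_iff] at h
    exact_mod_cast h
  have hp : 0 < p := (Fact.out : p.Prime).pos
  exact inv_anti₀ (by positivity) (mod_cast Nat.le_of_dvd (Nat.pos_of_ne_zero hn) hdvd)

lemma inv_le_norm_ofNat (n : ℕ) [n.AtLeastTwo] :
    (ofNat(n) : ℝ)⁻¹ ≤ ‖(ofNat(n) : ℤ_[p])‖ :=
  inv_le_norm_natCast (NeZero.ne n)

lemma norm_ofNat_mul_le (n : ℕ) [n.AtLeastTwo] (x : ℤ_[p]) : ‖ofNat(n) * x‖ ≤ ‖x‖ := by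
  rw [norm_mul]
  exact mul_le_of_le_one_left (norm_nonneg x) (PadicInt.norm_le_one _)

lemma norm_le_mul_norm_ofNat_mul (n : ℕ) [n.AtLeastTwo] (x : ℤ_[p]) :
    ‖x‖ ≤ ofNat(n) * ‖ofNat(n) * x‖ := by
  have h : 1 ≤ (ofNat(n) : ℝ) * ‖(ofNat(n) : ℤ_[p])‖ := by
    rw [← inv_le_iff_one_le_mul₀' Nat.ofNat_pos]
    exact inv_le_norm_ofNat n
  rw [norm_mul, ← mul_assoc]
  exact le_mul_of_one_le_left (norm_nonneg x) h

lemma norm_ofNat_eq_one {n : ℕ} [n.AtLeastTwo] (h : p.Coprime n) : ‖(ofNat(n) : ℤ_[p])‖ = 1 :=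
  PadicInt.norm_natCast_eq_one_iff.2 h

lemma norm_sub_le_max_norm (x y : ℤ_[p]) : ‖x - y‖ ≤ max ‖x‖ ‖y‖ := by
  rw [sub_eq_add_neg, ← norm_neg y]
  exact PadicInt.nonarchimedean x (-y)

end Norm

section Haar

variable (μ : Measure ℤ_[p]) [IsProbabilityMeasure μ] [μ.IsAddHaarMeasure]

lemma measure_norm_le_zpow (n : ℕ) :
    μ {x | ‖x‖ ≤ (p : ℝ) ^ (-n : ℤ)} = ENNReal.ofReal ((p : ℝ) ^ (-n : ℤ)) := by
  let H : AddSubgroup ℤ_[p] := (PadicInt.toZModPow (p := p) n).toAddMonoidHom.ker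
  have hH : (H : Set ℤ_[p]) = {x | ‖x‖ ≤ (p : ℝ) ^ (-n : ℤ)} := by
    ext x
    rw [mem_ofPred_eq, PadicInt.norm_le_pow_iff_mem_span_pow, ← PadicInt.ker_toZModPow]
    rfl
  have hindex : H.index = p ^ n := by
    have hrange : (PadicInt.toZModPow (p := p) n).toAddMonoidHom.range = ⊤ :=
      AddMonoidHom.range_eq_top.2 (ZMod.ringHom_surjective _)
    rw [AddSubgroup.index_ker, hrange]
    simp
  have hp : 0 < p := (Fact.out : p.Prime).pos
  have : H.FiniteIndex := ⟨by rw [hindex]; positivity⟩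
  have hclosed : IsClosed (H : Set ℤ_[p]) := hH ▸ isClosed_le continuous_norm continuous_const
  have hmul := AddSubgroup.index_mul_measure H hclosed.measurableSet μ
  rw [hH, hindex, measure_univ, mul_comm] at hmul
  rw [ENNReal.eq_inv_of_mul_eq_one_left hmul, zpow_neg, zpow_natCast,
    ENNReal.ofReal_inv_of_pos (by positivity), ENNReal.ofReal_pow (by positivity)]
  simp

lemma measure_norm_le {s : ℝ} (hs : 0 < s) : μ {x | ‖x‖ ≤ s} ≤ ENNReal.ofReal s := by
  rcases le_or_gt 1 s with h | h
  · exact prob_le_one.trans (ENNReal.one_le_ofReal.2 h)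
  have hp1 : (1 : ℝ) < p := mod_cast (Fact.out : p.Prime).one_lt
  obtain ⟨n, hlt, hle⟩ := exists_nat_pow_near_of_lt_one hs h.le
    (inv_pos.2 (one_pos.trans hp1)) (inv_lt_one_of_one_lt₀ hp1)
  have hpow (m : ℕ) : (p : ℝ)⁻¹ ^ m = (p : ℝ) ^ (-m : ℤ) := by simp
  rw [hpow] at hlt hle
  rcases hle.eq_or_lt with rfl | hslt
  · exact (measure_norm_le_zpow μ n).le
  calc μ {x | ‖x‖ ≤ s} ≤ μ {x | ‖x‖ ≤ (p : ℝ) ^ (-(n + 1 : ℕ) : ℤ)} := by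
        refine measure_mono fun x hx => ?_
        rw [mem_ofPred_eq, PadicInt.norm_le_pow_iff_norm_lt_pow_add_one, Nat.cast_succ,
          neg_add_rev, neg_add_cancel_comm]
        exact hx.trans_lt hslt
    _ = ENNReal.ofReal ((p : ℝ) ^ (-(n + 1 : ℕ) : ℤ)) := measure_norm_le_zpow μ (n + 1)
    _ ≤ ENNReal.ofReal s := ENNReal.ofReal_le_ofReal hlt.le

lemma measure_mul_left_image {c : ℤ_[p]} (hc : c ≠ 0) (S : Set ℤ_[p]) :
    μ ((c * ·) '' S) = ENNReal.ofReal ‖c‖ * μ S := by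
  have hemb : MeasurableEmbedding (AddMonoidHom.mulLeft c) :=
    ((continuous_const_mul c).isClosedEmbedding (mul_right_injective₀ hc)).measurableEmbedding
  let ν := μ.comap (AddMonoidHom.mulLeft c)
  have hν (T : Set ℤ_[p]) : ν T = μ ((c * ·) '' T) := hemb.comap_apply μ T
  have : ν.IsAddLeftInvariant := Measure.IsAddLeftInvariant.comap μ hemb
  have : IsFiniteMeasure ν := ⟨by rw [hν]; exact measure_lt_top _ _⟩
  have hsmul := Measure.isAddInvariant_eq_smul_of_compactSpace ν μ
  have huniv : ν univ = ENNReal.ofReal ‖c‖ := by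
    have himage : (c * ·) '' univ = {x | ‖x‖ ≤ ‖c‖} := by
      ext x
      simp [← dvd_iff_norm_le, dvd_def, eq_comm]
    rw [hν, himage, PadicInt.norm_eq_zpow_neg_valuation hc, measure_norm_le_zpow]
  rw [hsmul, Measure.smul_apply, measure_univ, ENNReal.smul_def, smul_eq_mul, mul_one] at huniv
  rw [← hν, hsmul, Measure.smul_apply, ENNReal.smul_def, smul_eq_mul, huniv]

lemma measure_affine_preimage_le {c : ℤ_[p]} (hc : c ≠ 0) (β : ℤ_[p]) (S : Set ℤ_[p]) :
    μ {x | c * x + β ∈ S} ≤ ENNReal.ofReal ‖c‖⁻¹ * μ S := by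
  have hc0 : 0 < ‖c‖ := norm_pos_iff.2 hc
  calc μ {x | c * x + β ∈ S} = ENNReal.ofReal ‖c‖⁻¹ * μ ((c * ·) '' {x | c * x + β ∈ S}) := by
        rw [measure_mul_left_image μ hc, ← mul_assoc, ← ENNReal.ofReal_mul (by positivity),
          inv_mul_cancel₀ hc0.ne', ENNReal.ofReal_one, one_mul]
    _ ≤ ENNReal.ofReal ‖c‖⁻¹ * μ ((· + β) ⁻¹' S) := by
        gcongr
        rintro _ ⟨x, hx, rfl⟩
        exact hx
    _ = ENNReal.ofReal ‖c‖⁻¹ * μ S := by rw [measure_preimage_add_right]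

lemma measure_norm_affine_le {c : ℤ_[p]} (hc : c ≠ 0) (β : ℤ_[p]) {s : ℝ} (hs : 0 < s) :
    μ {x | ‖c * x + β‖ ≤ s} ≤ ENNReal.ofReal (‖c‖⁻¹ * s) := by
  rw [ENNReal.ofReal_mul (by positivity)]
  exact (measure_affine_preimage_le μ hc β {y | ‖y‖ ≤ s}).trans
    (by gcongr; exact measure_norm_le μ hs)

end Haar

section Integration

variable {X Y ι : Type*} [MeasurableSpace X] [MeasurableSpace Y]

lemma lintegral_le_sum_mul_measure_of_cover (μ : Measure X) {f : X → ENNReal} (s : Finset ι)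
    (S : ι → Set X) (c : ι → ENNReal)
    (h : ∀ x, f x ≠ 0 → ∃ i ∈ s, x ∈ S i ∧ f x ≤ c i) :
    ∫⁻ x, f x ∂μ ≤ ∑ i ∈ s, c i * μ (S i) := by
  calc ∫⁻ x, f x ∂μ
      ≤ ∫⁻ x, ∑ i ∈ s, (toMeasurable μ (S i)).indicator (fun _ => c i) x ∂μ := by
        refine lintegral_mono fun x => ?_
        rcases eq_or_ne (f x) 0 with hx | hx
        · simp [hx]
        obtain ⟨i, his, hxS, hfc⟩ := h x hx
        rw [← indicator_of_mem (subset_toMeasurable μ (S i) hxS) fun _ => c i] at hfc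
        exact hfc.trans (Finset.single_le_sum
          (f := fun j => (toMeasurable μ (S j)).indicator (fun _ => c j) x)
          (fun _ _ => zero_le) his)
    _ = ∑ i ∈ s, c i * μ (S i) := by
        rw [lintegral_finsetSum _ fun i _ =>
          measurable_const.indicator (measurableSet_toMeasurable μ (S i))]
        simp_rw [lintegral_indicator_const (measurableSet_toMeasurable μ _),
          measure_toMeasurable]

lemma lintegral_le_mul_measure_of_cover (μ : Measure X) {f : X → ENNReal} (S : Set X)
    (c : ENNReal) (h : ∀ x, f x ≠ 0 → x ∈ S ∧ f x ≤ c) : ∫⁻ x, f x ∂μ ≤ c * μ S := by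
  simpa using lintegral_le_sum_mul_measure_of_cover μ (Finset.univ : Finset Unit)
    (fun _ => S) (fun _ => c) (by simpa using h)

lemma measure_prod_le_mul_of_fiber_le (μ : Measure X) (ν : Measure Y) [SFinite ν]
    {S : Set (X × Y)} (hS : MeasurableSet S) {P : Set X} (hP : ∀ x y, (x, y) ∈ S → x ∈ P)
    {c : ENNReal} (hc : ∀ x ∈ P, ν (Prod.mk x ⁻¹' S) ≤ c) :
    μ.prod ν S ≤ c * μ P := by
  rw [Measure.prod_apply hS]
  refine lintegral_le_mul_measure_of_cover μ P c fun x hx => ?_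
  obtain ⟨y, hy⟩ := nonempty_of_measure_ne_zero hx
  exact ⟨hP x y hy, hc x (hP x y hy)⟩

lemma exists_norm_le_zpow_le_max (y : ℤ_[p]) (n : ℕ) :
    ∃ h ≤ n, ‖y‖ ≤ (p : ℝ) ^ (-h : ℤ) ∧ (p : ℝ) ^ (-h : ℤ) ≤ max ‖y‖ ((p : ℝ) ^ (-n : ℤ)) := by
  by_cases hyn : ‖y‖ ≤ (p : ℝ) ^ (-n : ℤ)
  · exact ⟨n, le_rfl, hyn, le_max_right _ _⟩
  have hy : y ≠ 0 := by
    rintro rfl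
    exact hyn (by rw [norm_zero]; positivity)
  have hnorm := PadicInt.norm_eq_zpow_neg_valuation hy
  rw [PadicInt.norm_le_pow_iff_le_valuation y hy] at hyn
  exact ⟨y.valuation, by lia, hnorm.le, hnorm ▸ le_max_left _ _⟩

lemma lintegral_inv_max_norm_le (μ : Measure X) (y : X → ℤ_[p]) {K : ℝ}
    (hK : ∀ r > 0, μ {x | ‖y x‖ ≤ r} ≤ ENNReal.ofReal (K * r)) (n : ℕ) :
    ∫⁻ x, ENNReal.ofReal (max ‖y x‖ ((p : ℝ) ^ (-n : ℤ)))⁻¹ ∂μ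
      ≤ ENNReal.ofReal ((n + 1) * K) := by
  have hp : (0 : ℝ) < p := mod_cast (Fact.out : p.Prime).pos
  calc ∫⁻ x, ENNReal.ofReal (max ‖y x‖ ((p : ℝ) ^ (-n : ℤ)))⁻¹ ∂μ
      ≤ ∑ h ∈ Finset.range (n + 1),
          ENNReal.ofReal ((p : ℝ) ^ h) * μ {x | ‖y x‖ ≤ (p : ℝ) ^ (-h : ℤ)} := by
        refine lintegral_le_sum_mul_measure_of_cover μ _ _ _ fun x _ => ?_
        obtain ⟨h, hn, hyh, hmax⟩ := exists_norm_le_zpow_le_max (y x) n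
        refine ⟨h, Finset.mem_range_succ_iff.2 hn, hyh, ENNReal.ofReal_le_ofReal ?_⟩
        rw [← zpow_natCast, ← inv_inv ((p : ℝ) ^ (h : ℤ)), ← zpow_neg]
        exact inv_anti₀ (by positivity) hmax
    _ ≤ ∑ _h ∈ Finset.range (n + 1), ENNReal.ofReal K := by
        refine Finset.sum_le_sum fun h _ => ?_
        calc _ ≤ ENNReal.ofReal ((p : ℝ) ^ h) * ENNReal.ofReal (K * (p : ℝ) ^ (-h : ℤ)) := by
              gcongr
              exact hK _ (by positivity)
          _ = ENNReal.ofReal K := by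
              rw [← ENNReal.ofReal_mul (by positivity), zpow_neg, zpow_natCast, mul_left_comm,
                mul_inv_cancel₀ (by positivity), mul_one]
    _ = ENNReal.ofReal ((n + 1) * K) := by
        rw [Finset.sum_const, Finset.card_range, nsmul_eq_mul, ENNReal.ofReal_mul (by positivity)]
        norm_cast

end Integration

section Square

lemma norm_sub_le_or_norm_add_le_of_norm_sq_sub_le {x y t : ℤ_[p]} {E : ℝ} (hE : 0 < E)
    (hx : ‖x ^ 2 - t‖ ≤ E) (hy : ‖y ^ 2 - t‖ ≤ E) :
    ‖x - y‖ ≤ 2 * E / max (√‖t‖) (√E) ∨ ‖x + y‖ ≤ 2 * E / max (√‖t‖) (√E) := by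
  have hsE : 0 < √E := Real.sqrt_pos.2 hE
  have hprod : ‖x - y‖ * ‖x + y‖ ≤ E := by
    have hfactor : (x - y) * (x + y) = (x ^ 2 - t) - (y ^ 2 - t) := by ring
    rw [← norm_mul, hfactor]
    exact (norm_sub_le_max_norm _ _).trans (max_le hx hy)
  have h₁ := norm_nonneg (x - y)
  have h₂ := norm_nonneg (x + y)
  simp only [le_div_iff₀ (lt_max_of_lt_right hsE)]
  rcases le_or_gt ‖t‖ E with ht | ht
  · rw [max_eq_right (Real.sqrt_le_sqrt ht)]
    have hEE := Real.mul_self_sqrt hE.le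
    by_contra! h
    nlinarith
  · rw [max_eq_left (Real.sqrt_le_sqrt ht.le)]
    have hyt : √‖t‖ = ‖y‖ := by
      have hsq := PadicInt.norm_add_eq_max_of_ne (hy.trans_lt ht).ne
      rw [sub_add_cancel, norm_pow, max_eq_right (hy.trans ht.le)] at hsq
      rw [← hsq, Real.sqrt_sq (norm_nonneg y)]
    have htwo : ‖y‖ ≤ 2 * max ‖x + y‖ ‖x - y‖ := by
      have hdiff := norm_sub_le_max_norm (x + y) (x - y)
      rw [add_sub_sub_cancel, ← two_mul] at hdiff
      linarith [norm_le_mul_norm_ofNat_mul 2 y]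
    rw [hyt]
    rcases le_total ‖x + y‖ ‖x - y‖ with h | h
    · rw [max_eq_right h] at htwo
      exact .inr (by nlinarith)
    · rw [max_eq_left h] at htwo
      exact .inl (by nlinarith)

variable (μ : Measure ℤ_[p]) [IsProbabilityMeasure μ] [μ.IsAddHaarMeasure]

lemma measure_norm_affine_sq_sub_le {c : ℤ_[p]} (hc : c ≠ 0) (β t : ℤ_[p]) {E : ℝ} (hE : 0 < E) :
    μ {x | ‖(c * x + β) ^ 2 - t‖ ≤ E}
      ≤ ENNReal.ofReal (4 * ‖c‖⁻¹ * E / max (√‖t‖) (√E)) := by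
  set s : ℝ := 2 * E / max (√‖t‖) (√E) with hs
  have hsE : 0 < √E := Real.sqrt_pos.2 hE
  have hs0 : 0 < s := div_pos (by positivity) (lt_max_of_lt_right hsE)
  rcases eq_empty_or_nonempty {x | ‖(c * x + β) ^ 2 - t‖ ≤ E} with h | ⟨x₀, hx₀⟩
  · simp [h]
  set y := c * x₀ + β
  calc μ {x | ‖(c * x + β) ^ 2 - t‖ ≤ E}
      ≤ μ ({x | ‖c * x + (β - y)‖ ≤ s} ∪ {x | ‖c * x + (β + y)‖ ≤ s}) := by
        refine measure_mono fun x hx => ?_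
        simpa only [mem_union, mem_ofPred_eq, add_sub_assoc, add_assoc] using
          norm_sub_le_or_norm_add_le_of_norm_sq_sub_le hE hx hx₀
    _ ≤ ENNReal.ofReal (‖c‖⁻¹ * s) + ENNReal.ofReal (‖c‖⁻¹ * s) :=
        (measure_union_le _ _).trans
          (add_le_add (measure_norm_affine_le μ hc _ hs0) (measure_norm_affine_le μ hc _ hs0))
    _ = ENNReal.ofReal (4 * ‖c‖⁻¹ * E / max (√‖t‖) (√E)) := by
        rw [← ENNReal.ofReal_add (by positivity) (by positivity), hs]
        congr 1
        ring

lemma measure_norm_mul_affine_sq_add_le {m c : ℤ_[p]} (hm : m ≠ 0) (hc : c ≠ 0) (β G : ℤ_[p])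
    {E : ℝ} (hE : 0 < E) :
    μ {x | ‖m * (c * x + β) ^ 2 + G‖ ≤ E}
      ≤ ENNReal.ofReal (4 * ‖m * c‖⁻¹ * E / max (√‖m * G‖) (√E)) := by
  rw [← norm_neg (m * G)]
  refine (measure_mono fun x hx => ?_).trans
    (measure_norm_affine_sq_sub_le μ (mul_ne_zero hm hc) (m * β) (-(m * G)) hE)
  have hscale : (m * c * x + m * β) ^ 2 - -(m * G) = m * (m * (c * x + β) ^ 2 + G) := by ring
  rw [mem_ofPred_eq, hscale, norm_mul]
  exact (mul_le_of_le_one_left (norm_nonneg _) (PadicInt.norm_le_one m)).trans hx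

end Square

section Seminvariants

variable {A : Type*} [CommRing A]

/-- The seminvariant of degree two (the leading coefficient of the Hessian covariant, up to
sign) of the binary quartic form `ax⁴ + bx³y + cx²y² + dxy³ + ey⁴`. -/
def seminvH (a b c : A) : A := 8 * a * c - 3 * b ^ 2

/-- The seminvariant of degree three (the leading coefficient of the sextic covariant) of the
binary quartic form `ax⁴ + bx³y + cx²y² + dxy³ + ey⁴`. -/
def seminvR (a b c d : A) : A := 8 * a ^ 2 * d + (b ^ 3 - 4 * a * b * c)

lemma syzygy (f : BQ A) :
    27 * seminvR f.a f.b f.c f.d ^ 2 + seminvH f.a f.b f.c ^ 3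
        - 48 * f.a ^ 2 * seminvH f.a f.b f.c * f.invI
      = -(64 * f.a ^ 3 * f.invJ) := by
  simp only [seminvR, seminvH, BQ.invI, BQ.invJ]
  ring

lemma twentySeven_mul_disc (f : BQ A) : 27 * f.disc = 4 * f.invI ^ 3 - f.invJ ^ 2 := by
  simp only [BQ.disc, BQ.invI, BQ.invJ]
  ring

end Seminvariants

section SeminvariantMeasure

variable (μ : Measure ℤ_[p]) [IsProbabilityMeasure μ] [μ.IsAddHaarMeasure]

lemma continuous_seminvH (a : ℤ_[p]) :
    Continuous fun x : ℤ_[p] × ℤ_[p] => seminvH a x.1 x.2 := by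
  unfold seminvH
  fun_prop

lemma continuous_seminvR (a : ℤ_[p]) :
    Continuous fun x : (ℤ_[p] × ℤ_[p]) × ℤ_[p] => seminvR a x.1.1 x.1.2 x.2 := by
  unfold seminvR
  fun_prop

lemma norm_le_sqrt_of_norm_seminvH_sub_le {a τ b c : ℤ_[p]} {r : ℝ} (hτ : ‖τ‖ ≤ ‖a‖)
    (h : ‖seminvH a b c - τ‖ ≤ r) : ‖b‖ ≤ √(3 * max r ‖a‖) := by
  have hac : ‖8 * a * c - τ‖ ≤ ‖a‖ := by
    refine (norm_sub_le_max_norm _ _).trans (max_le ?_ hτ)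
    rw [mul_right_comm, norm_mul]
    exact mul_le_of_le_one_left (norm_nonneg a) (PadicInt.norm_le_one _)
  have hb : ‖3 * b ^ 2‖ ≤ max r ‖a‖ := by
    have hsplit : 3 * b ^ 2 = (8 * a * c - τ) - (seminvH a b c - τ) := by
      unfold seminvH
      ring
    rw [hsplit, max_comm]
    exact (norm_sub_le_max_norm _ _).trans (max_le_max hac h)
  apply Real.le_sqrt_of_sq_le
  rw [← norm_pow]
  linarith [norm_le_mul_norm_ofNat_mul 3 (b ^ 2)]

lemma measure_norm_seminvH_fiber_le {a : ℤ_[p]} (ha : a ≠ 0) (b τ : ℤ_[p]) {r : ℝ}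
    (hr : 0 < r) :
    μ {c | ‖seminvH a b c - τ‖ ≤ r} ≤ ENNReal.ofReal (8 * r / max r ‖a‖) := by
  have : 0 < ‖a‖ := norm_pos_iff.2 ha
  rcases le_total ‖a‖ r with h | h
  · rw [max_eq_left h, mul_div_cancel_right₀ _ hr.ne']
    exact prob_le_one.trans (by simp)
  have hset : {c | ‖seminvH a b c - τ‖ ≤ r} = {c | ‖8 * a * c + (-3 * b ^ 2 - τ)‖ ≤ r} := by
    simp only [seminvH, neg_mul, sub_eq_add_neg, add_assoc]
  rw [hset, max_eq_right h]
  refine (measure_norm_affine_le μ (mul_ne_zero (by norm_num) ha) _ hr).trans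
    (ENNReal.ofReal_le_ofReal ?_)
  rw [mul_comm 8 r, mul_div_assoc, mul_comm]
  gcongr
  rw [inv_le_comm₀ (norm_pos_iff.2 (mul_ne_zero (by norm_num) ha)) (by positivity), inv_div,
    div_le_iff₀ (by norm_num), mul_comm]
  exact norm_le_mul_norm_ofNat_mul 8 a

lemma measure_prod_norm_seminvH_sub_le {a τ : ℤ_[p]} (ha : a ≠ 0) (hτ : ‖τ‖ ≤ ‖a‖) {r : ℝ}
    (hr : 0 < r) :
    (μ.prod μ) {x | ‖seminvH a x.1 x.2 - τ‖ ≤ r} ≤ ENNReal.ofReal (14 / √‖a‖ * r) := by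
  have : 0 < ‖a‖ := norm_pos_iff.2 ha
  have hclosed : IsClosed {x : ℤ_[p] × ℤ_[p] | ‖seminvH a x.1 x.2 - τ‖ ≤ r} :=
    isClosed_le ((continuous_seminvH a).sub continuous_const).norm continuous_const
  have hm : 0 < max r ‖a‖ := lt_max_of_lt_left hr
  calc (μ.prod μ) {x | ‖seminvH a x.1 x.2 - τ‖ ≤ r}
      ≤ ENNReal.ofReal (8 * r / max r ‖a‖) * μ {b | ‖b‖ ≤ √(3 * max r ‖a‖)} :=
        measure_prod_le_mul_of_fiber_le μ μ hclosed.measurableSet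
          (fun _ _ h => norm_le_sqrt_of_norm_seminvH_sub_le hτ h)
          (fun b _ => measure_norm_seminvH_fiber_le μ ha b τ hr)
    _ ≤ ENNReal.ofReal (8 * r / max r ‖a‖ * √(3 * max r ‖a‖)) := by
        rw [ENNReal.ofReal_mul (by positivity)]
        gcongr
        exact measure_norm_le μ (by positivity)
    _ ≤ ENNReal.ofReal (14 / √‖a‖ * r) := by
        apply ENNReal.ofReal_le_ofReal
        have hsqrt : √(max r ‖a‖) * √(max r ‖a‖) = max r ‖a‖ := Real.mul_self_sqrt hm.le
        have : 0 < √(max r ‖a‖) := Real.sqrt_pos.2 hm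
        have hthree : √3 ≤ 14 / 8 := Real.sqrt_le_iff.2 (by norm_num)
        calc 8 * r / max r ‖a‖ * √(3 * max r ‖a‖) = 8 * √3 / √(max r ‖a‖) * r := by
              rw [Real.sqrt_mul (by norm_num)]
              nth_rw 1 [← hsqrt]
              field_simp
          _ ≤ 14 / √‖a‖ * r := by
              gcongr
              · linarith
              · exact le_max_right _ _

lemma measure_norm_seminvR_sq_add_le {a : ℤ_[p]} (ha : a ≠ 0) (b c G : ℤ_[p]) {E : ℝ}
    (hE : 0 < E) :
    μ {d | ‖27 * seminvR a b c d ^ 2 + G‖ ≤ E}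
      ≤ ENNReal.ofReal (864 * (‖a‖ ^ 2)⁻¹ * E / max (√‖27 * G‖) (√E)) := by
  have hc : 8 * a ^ 2 ≠ 0 := mul_ne_zero (by norm_num) (pow_ne_zero 2 ha)
  refine (measure_norm_mul_affine_sq_add_le μ (by norm_num) hc (b ^ 3 - 4 * a * b * c) G hE).trans
    (ENNReal.ofReal_le_ofReal ?_)
  have hcoeff : ‖27 * (8 * a ^ 2)‖⁻¹ ≤ 216 * (‖a‖ ^ 2)⁻¹ := by
    have hcombine : 27 * (8 * a ^ 2) = 216 * a ^ 2 := by ring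
    have : 0 < ‖a‖ := norm_pos_iff.2 ha
    have h := norm_le_mul_norm_ofNat_mul 216 (a ^ 2)
    rw [norm_pow] at h
    rw [hcombine, inv_le_comm₀ (norm_pos_iff.2 (mul_ne_zero (by norm_num) (pow_ne_zero 2 ha)))
      (by positivity), mul_inv, inv_inv, inv_mul_le_iff₀ (by norm_num)]
    exact h
  have hfour : 4 * ‖27 * (8 * a ^ 2)‖⁻¹ ≤ 864 * (‖a‖ ^ 2)⁻¹ := by linarith
  gcongr

lemma inv_max_sqrt_le_of_sq_mul_le {X Y B η E t : ℝ} (hX : 0 ≤ X) (hY : 0 ≤ Y) (hB : 0 < B)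
    (hη : 0 < η) (hXY : B / 12 ≤ max X Y) (hE : B * η ^ 2 ≤ E) (ht : X ^ 2 * Y / 27 ≤ t) :
    (max (√t) (√E))⁻¹ ≤ 18 / √B * ((max X η)⁻¹ + (max Y η)⁻¹) := by
  have hsB : 0 < √B := Real.sqrt_pos.2 hB
  have hBB : √B ^ 2 = B := Real.sq_sqrt hB.le
  have hmin : √B / 18 * min X Y ≤ √t := by
    apply Real.le_sqrt_of_sq_le
    rw [mul_pow, div_pow, hBB]
    have hcubic : B * min X Y ^ 2 ≤ 12 * (X ^ 2 * Y) := by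
      rcases le_total X Y with h | h
      · rw [max_eq_right h] at hXY
        rw [min_eq_left h]
        nlinarith [sq_nonneg X]
      · rw [max_eq_left h] at hXY
        rw [min_eq_right h]
        nlinarith [mul_le_mul h hXY (by positivity) hX, mul_nonneg hX hY]
    linarith
  have hη' : √B / 18 * η ≤ √E := by
    apply Real.le_sqrt_of_sq_le
    rw [mul_pow, div_pow, hBB]
    nlinarith [sq_nonneg η]
  calc (max (√t) (√E))⁻¹ ≤ (√B / 18 * max (min X Y) η)⁻¹ := by
        apply inv_anti₀ (by positivity)
        rw [mul_max_of_nonneg _ _ (by positivity)]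
        exact max_le_max hmin hη'
    _ = 18 / √B * (max (min X Y) η)⁻¹ := by rw [mul_inv, inv_div]
    _ ≤ 18 / √B * ((max X η)⁻¹ + (max Y η)⁻¹) := by
        gcongr
        rcases min_choice X Y with h | h <;> rw [h]
        · exact le_add_of_nonneg_right (by positivity)
        · exact le_add_of_nonneg_left (by positivity)

lemma measure_seminvR_sq_add_le_lintegral {a : ℤ_[p]} (ha : a ≠ 0) {E : ℝ} (hE : 0 < E)
    {g : ℤ_[p] × ℤ_[p] → ℤ_[p]} (hg : Continuous g) {T : Set (ℤ_[p] × ℤ_[p])} (hT : IsClosed T)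
    {w : ℤ_[p] × ℤ_[p] → ℝ}
    (hw : ∀ x ∈ T, 864 * (‖a‖ ^ 2)⁻¹ * E * (max (√‖27 * g x‖) (√E))⁻¹ ≤ w x) :
    ((μ.prod μ).prod μ)
        {x | x.1 ∈ T ∧ ‖27 * seminvR a x.1.1 x.1.2 x.2 ^ 2 + g x.1‖ ≤ E}
      ≤ ∫⁻ x, ENNReal.ofReal (w x) ∂(μ.prod μ) := by
  have hR := continuous_seminvR a
  have hF : IsClosed {x : (ℤ_[p] × ℤ_[p]) × ℤ_[p] |
      ‖27 * seminvR a x.1.1 x.1.2 x.2 ^ 2 + g x.1‖ ≤ E} :=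
    isClosed_le (by fun_prop) continuous_const
  have hclosed := (hT.preimage continuous_fst).inter hF
  refine (Measure.prod_apply hclosed.measurableSet).trans_le ?_
  refine lintegral_mono fun x => ?_
  by_cases hx : x ∈ T
  · refine (measure_mono fun d hd => hd.2).trans <|
      (measure_norm_seminvR_sq_add_le μ ha x.1 x.2 (g x) hE).trans ?_
    exact ENNReal.ofReal_le_ofReal (hw x hx)
  · exact (measure_mono_null (t := ∅) (fun d hd => hx hd.1) measure_empty).trans_le zero_le

lemma lintegral_mul_inv_max_norm_seminvH_le {a τ : ℤ_[p]} (ha : a ≠ 0) (hτ : ‖τ‖ ≤ ‖a‖)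
    {K : ℝ} (hK : 0 ≤ K) (n : ℕ) :
    ∫⁻ x, ENNReal.ofReal (K * (max ‖seminvH a x.1 x.2 - τ‖ ((p : ℝ) ^ (-n : ℤ)))⁻¹) ∂(μ.prod μ)
      ≤ ENNReal.ofReal (K * ((n + 1) * (14 / √‖a‖))) := by
  simp only [ENNReal.ofReal_mul hK]
  rw [lintegral_const_mul' _ _ ENNReal.ofReal_ne_top]
  gcongr
  exact lintegral_inv_max_norm_le _ _ (fun _ => measure_prod_norm_seminvH_sub_le μ ha hτ) n

lemma inv_max_sqrt_norm_sq_mul_le {x a α : ℤ_[p]} (ha : a ≠ 0) (hα : α ≠ 0) {η E : ℝ}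
    (hη : 0 < η) (hE : ‖a‖ * ‖α‖ * η ^ 2 ≤ E) :
    (max (√‖27 * ((x - 4 * a * α) ^ 2 * (x - -8 * a * α))‖) (√E))⁻¹
      ≤ 18 / √(‖a‖ * ‖α‖) * ((max ‖x - 4 * a * α‖ η)⁻¹ + (max ‖x - -8 * a * α‖ η)⁻¹) := by
  have hB : 0 < ‖a‖ * ‖α‖ := mul_pos (norm_pos_iff.2 ha) (norm_pos_iff.2 hα)
  refine inv_max_sqrt_le_of_sq_mul_le (norm_nonneg _) (norm_nonneg _) hB hη ?_ hE ?_
  · have h := norm_sub_le_max_norm (x - -8 * a * α) (x - 4 * a * α)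
    have hdiff : x - -8 * a * α - (x - 4 * a * α) = 12 * (a * α) := by ring
    rw [hdiff, max_comm] at h
    refine le_trans ?_ h
    rw [← norm_mul]
    linarith [norm_le_mul_norm_ofNat_mul 12 (a * α)]
  · rw [← norm_pow, ← norm_mul]
    linarith [norm_le_mul_norm_ofNat_mul 27 ((x - 4 * a * α) ^ 2 * (x - -8 * a * α))]

-- If `I = α²` and `J = 2α³`, the syzygy factors through `(H - 4aα)²(H + 8aα)`.
lemma measure_seminv_sq_mul_le {a α : ℤ_[p]} (ha : a ≠ 0) (hα : α ≠ 0) {E : ℝ} (hE : 0 < E)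
    {n : ℕ} (hn : ‖a‖ * ‖α‖ * ((p : ℝ) ^ (-n : ℤ)) ^ 2 ≤ E) :
    ((μ.prod μ).prod μ) {x | ‖27 * seminvR a x.1.1 x.1.2 x.2 ^ 2 +
        (seminvH a x.1.1 x.1.2 - 4 * a * α) ^ 2 * (seminvH a x.1.1 x.1.2 - -8 * a * α)‖ ≤ E}
      ≤ ENNReal.ofReal (435456 * (n + 1) * E * (‖a‖ ^ 3)⁻¹ / √‖α‖) := by
  have : 0 < ‖α‖ := norm_pos_iff.2 hα
  have ha0 : 0 < ‖a‖ := norm_pos_iff.2 ha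
  have hp : (0 : ℝ) < p := mod_cast (Fact.out : p.Prime).pos
  have hH := continuous_seminvH a
  set η : ℝ := (p : ℝ) ^ (-n : ℤ)
  set K : ℝ := 864 * (‖a‖ ^ 2)⁻¹ * E * (18 / √(‖a‖ * ‖α‖)) with hK
  let w (τ : ℤ_[p]) (x : ℤ_[p] × ℤ_[p]) : ℝ := K * (max ‖seminvH a x.1 x.2 - τ‖ η)⁻¹
  have hw (τ : ℤ_[p]) : Continuous (w τ) :=
    continuous_const.mul (.inv₀ (by fun_prop) fun x => (lt_max_of_lt_right (by positivity)).ne')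
  have hint (m : ℤ_[p]) :
      ∫⁻ x, ENNReal.ofReal (w (m * a * α) x) ∂(μ.prod μ) ≤
        ENNReal.ofReal (K * ((n + 1) * (14 / √‖a‖))) := by
    refine lintegral_mul_inv_max_norm_seminvH_le μ ha ?_ (by positivity) n
    rw [mul_right_comm, norm_mul]
    exact mul_le_of_le_one_left ha0.le (PadicInt.norm_le_one _)
  have hbound (x : ℤ_[p] × ℤ_[p]) : 864 * (‖a‖ ^ 2)⁻¹ * E * (max (√‖27 * ((seminvH a x.1 x.2 -
      4 * a * α) ^ 2 * (seminvH a x.1 x.2 - -8 * a * α))‖) (√E))⁻¹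
        ≤ w (4 * a * α) x + w (-8 * a * α) x := by
    simp only [w, hK, ← mul_add, mul_assoc _ (18 / √(‖a‖ * ‖α‖))]
    gcongr
    exact inv_max_sqrt_norm_sq_mul_le ha hα (by positivity) hn
  calc _ ≤ ∫⁻ x, ENNReal.ofReal (w (4 * a * α) x + w (-8 * a * α) x) ∂(μ.prod μ) := by
        simpa only [mem_univ, true_and] using measure_seminvR_sq_add_le_lintegral μ ha hE
          (g := fun x => (seminvH a x.1 x.2 - 4 * a * α) ^ 2 * (seminvH a x.1 x.2 - -8 * a * α))
          (by fun_prop) isClosed_univ fun x _ => hbound x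
    _ ≤ ∫⁻ x, ENNReal.ofReal (w (4 * a * α) x) + ENNReal.ofReal (w (-8 * a * α) x) ∂(μ.prod μ) :=
        lintegral_mono fun x => ENNReal.ofReal_add_le
    _ ≤ ENNReal.ofReal (K * ((n + 1) * (14 / √‖a‖)))
        + ENNReal.ofReal (K * ((n + 1) * (14 / √‖a‖))) := by
        rw [lintegral_add_left (hw _).measurable.ennreal_ofReal]
        exact add_le_add (hint 4) (hint (-8))
    _ = ENNReal.ofReal (435456 * (n + 1) * E * (‖a‖ ^ 3)⁻¹ / √‖α‖) := by
        rw [← ENNReal.ofReal_add (by positivity) (by positivity), hK, Real.sqrt_mul ha0.le]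
        congr 1
        have hsa : √‖a‖ ^ 2 = ‖a‖ := Real.sq_sqrt ha0.le
        field_simp
        rw [hsa]
        ring

lemma sqrt_div_six_mul_le_sqrt_norm_cube_sub {a I x : ℤ_[p]} {B : ℝ} (hB : 0 < B)
    (hI : ‖a‖ ^ 2 * ‖I‖ < B ^ 2) (hx : B ≤ ‖x‖) :
    √B / 6 * ‖x‖ ≤ √‖27 * (x ^ 3 - 48 * a ^ 2 * x * I)‖ := by
  have hlt : ‖48 * a ^ 2 * x * I‖ < ‖x ^ 3‖ := by
    calc ‖48 * a ^ 2 * x * I‖ ≤ ‖a ^ 2 * x * I‖ := by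
          simpa only [mul_assoc] using norm_ofNat_mul_le 48 (a ^ 2 * (x * I))
      _ = ‖a‖ ^ 2 * ‖I‖ * ‖x‖ := by rw [norm_mul, norm_mul, norm_pow, mul_right_comm]
      _ < B ^ 2 * ‖x‖ := by gcongr; exact hB.trans_le hx
      _ ≤ ‖x‖ ^ 2 * ‖x‖ := by gcongr
      _ = ‖x ^ 3‖ := by rw [norm_pow]; ring
  have hnorm : ‖x ^ 3 - 48 * a ^ 2 * x * I‖ = ‖x‖ ^ 3 := by
    rw [← norm_neg (48 * a ^ 2 * x * I)] at hlt
    rw [sub_eq_add_neg, PadicInt.norm_add_eq_max_of_ne hlt.ne', max_eq_left hlt.le, norm_pow]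
  apply Real.le_sqrt_of_sq_le
  have h := norm_le_mul_norm_ofNat_mul 27 (x ^ 3 - 48 * a ^ 2 * x * I)
  rw [hnorm] at h
  rw [mul_pow, div_pow, Real.sq_sqrt hB.le]
  nlinarith [mul_le_mul_of_nonneg_right hx (sq_nonneg ‖x‖), pow_nonneg (norm_nonneg x) 3]

lemma measure_norm_seminvH_le_and_seminvR_le {a : ℤ_[p]} (ha : a ≠ 0) {E r : ℝ} (hE : 0 < E)
    (hr : 0 < r) {g : ℤ_[p] × ℤ_[p] → ℤ_[p]} (hg : Continuous g) :
    ((μ.prod μ).prod μ) {x | ‖seminvH a x.1.1 x.1.2‖ ≤ r ∧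
        ‖27 * seminvR a x.1.1 x.1.2 x.2 ^ 2 + g x.1‖ ≤ E}
      ≤ ENNReal.ofReal (12096 * (‖a‖ ^ 2)⁻¹ * (√‖a‖)⁻¹ * (√E * r)) := by
  have hH : Continuous fun x : (ℤ_[p] × ℤ_[p]) × ℤ_[p] => seminvH a x.1.1 x.1.2 :=
    (continuous_seminvH a).comp continuous_fst
  have hR := continuous_seminvR a
  have hP : IsClosed {x : (ℤ_[p] × ℤ_[p]) × ℤ_[p] | ‖seminvH a x.1.1 x.1.2‖ ≤ r} :=
    isClosed_le (by fun_prop) continuous_const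
  have hF : IsClosed {x : (ℤ_[p] × ℤ_[p]) × ℤ_[p] |
      ‖27 * seminvR a x.1.1 x.1.2 x.2 ^ 2 + g x.1‖ ≤ E} :=
    isClosed_le (by fun_prop) continuous_const
  calc _ ≤ ENNReal.ofReal (864 * (‖a‖ ^ 2)⁻¹ * √E) * (μ.prod μ) {x | ‖seminvH a x.1 x.2‖ ≤ r} := by
        refine measure_prod_le_mul_of_fiber_le (μ.prod μ) μ (hP.inter hF).measurableSet
          (fun x d hx => hx.1) fun x _ => ?_
        refine (measure_mono fun d hd => hd.2).trans <|
          (measure_norm_seminvR_sq_add_le μ ha x.1 x.2 (g x) hE).trans ?_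
        have : 0 < √E := Real.sqrt_pos.2 hE
        apply ENNReal.ofReal_le_ofReal
        calc _ ≤ 864 * (‖a‖ ^ 2)⁻¹ * E / √E := by gcongr; exact le_max_right _ _
          _ = 864 * (‖a‖ ^ 2)⁻¹ * √E := by rw [mul_div_assoc, Real.div_sqrt]
    _ ≤ ENNReal.ofReal (864 * (‖a‖ ^ 2)⁻¹ * √E) * ENNReal.ofReal (14 / √‖a‖ * r) := by
        gcongr
        simpa only [sub_zero] using
          measure_prod_norm_seminvH_sub_le μ ha (norm_zero.trans_le (norm_nonneg a)) hr
    _ = ENNReal.ofReal (12096 * (‖a‖ ^ 2)⁻¹ * (√‖a‖)⁻¹ * (√E * r)) := by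
        rw [← ENNReal.ofReal_mul (by positivity)]
        congr 1
        ring

lemma measure_le_norm_seminvH_and_seminv_cube_le {a I : ℤ_[p]} (ha : a ≠ 0) {E B : ℝ}
    (hE : 0 < E) (hB : 0 < B) {n : ℕ} (hI : ‖a‖ ^ 2 * ‖I‖ < B ^ 2)
    (hn : (p : ℝ) ^ (-n : ℤ) ≤ B) :
    ((μ.prod μ).prod μ) {x | B ≤ ‖seminvH a x.1.1 x.1.2‖ ∧
        ‖27 * seminvR a x.1.1 x.1.2 x.2 ^ 2 +
          (seminvH a x.1.1 x.1.2 ^ 3 - 48 * a ^ 2 * seminvH a x.1.1 x.1.2 * I)‖ ≤ E}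
      ≤ ENNReal.ofReal (72576 * (‖a‖ ^ 2)⁻¹ * (√‖a‖)⁻¹ * ((n + 1) * E * (√B)⁻¹)) := by
  have hH := continuous_seminvH a
  have hT : IsClosed {x : ℤ_[p] × ℤ_[p] | B ≤ ‖seminvH a x.1 x.2‖} :=
    isClosed_le continuous_const hH.norm
  set K : ℝ := 864 * (‖a‖ ^ 2)⁻¹ * E * (6 / √B) with hK
  calc _ ≤ ∫⁻ x, ENNReal.ofReal (K * (max ‖seminvH a x.1 x.2 - 0‖ ((p : ℝ) ^ (-n : ℤ)))⁻¹)
        ∂(μ.prod μ) := by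
        refine measure_seminvR_sq_add_le_lintegral μ ha hE (g := fun x => seminvH a x.1 x.2 ^ 3 -
          48 * a ^ 2 * seminvH a x.1 x.2 * I) (by fun_prop) hT fun x hx => ?_
        have : 0 < ‖seminvH a x.1 x.2‖ := hB.trans_le hx
        rw [sub_zero, max_eq_left (hn.trans hx), hK, mul_assoc _ (6 / √B), ← inv_div, ← mul_inv]
        gcongr
        exact (sqrt_div_six_mul_le_sqrt_norm_cube_sub hB hI hx).trans (le_max_left _ _)
    _ ≤ ENNReal.ofReal (K * ((n + 1) * (14 / √‖a‖))) :=
        lintegral_mul_inv_max_norm_seminvH_le μ ha (norm_zero.trans_le (norm_nonneg a))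
          (by positivity) n
    _ = ENNReal.ofReal (72576 * (‖a‖ ^ 2)⁻¹ * (√‖a‖)⁻¹ * ((n + 1) * E * (√B)⁻¹)) := by
        rw [hK]
        congr 1
        ring

lemma measure_seminv_cube_le {a I : ℤ_[p]} (ha : a ≠ 0) {E B r : ℝ} (hE : 0 < E) (hB : 0 < B)
    (hr : 0 < r) {n : ℕ} (hI : ‖a‖ ^ 2 * ‖I‖ < B ^ 2) (hn : (p : ℝ) ^ (-n : ℤ) ≤ B)
    (hBr : ∀ x : ℤ_[p], ‖x‖ < B → ‖x‖ ≤ r) :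
    ((μ.prod μ).prod μ) {x | ‖27 * seminvR a x.1.1 x.1.2 x.2 ^ 2 +
        (seminvH a x.1.1 x.1.2 ^ 3 - 48 * a ^ 2 * seminvH a x.1.1 x.1.2 * I)‖ ≤ E}
      ≤ ENNReal.ofReal (72576 * (‖a‖ ^ 2)⁻¹ * (√‖a‖)⁻¹ * ((n + 1) * E * (√B)⁻¹ + √E * r)) := by
  have hH := continuous_seminvH a
  let g (x : ℤ_[p] × ℤ_[p]) : ℤ_[p] :=
    seminvH a x.1 x.2 ^ 3 - 48 * a ^ 2 * seminvH a x.1 x.2 * I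
  calc _ ≤ _ := measure_mono fun x hx => (le_or_gt B ‖seminvH a x.1.1 x.1.2‖).imp
        (fun h => And.intro h hx) fun h => And.intro (hBr _ h) hx
    _ ≤ _ := measure_union_le _ _
    _ ≤ _ := add_le_add (measure_le_norm_seminvH_and_seminv_cube_le μ ha hE hB hI hn)
        (measure_norm_seminvH_le_and_seminvR_le μ ha hE hr (g := g) (by fun_prop))
    _ ≤ _ := by
        rw [← ENNReal.ofReal_add (by positivity) (by positivity), mul_add]
        gcongr
        norm_num

end SeminvariantMeasure

section SquareRoot

lemma norm_sq_eq_of_norm_sq_sub_lt {x t : ℤ_[p]} (h : ‖x ^ 2 - t‖ < ‖t‖) : ‖x‖ ^ 2 = ‖t‖ := by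
  have hmax := PadicInt.norm_add_eq_max_of_ne h.ne
  rwa [sub_add_cancel, max_eq_right h.le, norm_pow] at hmax

lemma exists_sq_eq_of_norm_sq_sub_lt {x t : ℤ_[p]} (h : ‖x ^ 2 - t‖ < ‖(4 : ℤ_[p])‖ * ‖t‖) :
    ∃ z : ℤ_[p], z ^ 2 = t := by
  have hx : ‖x‖ ^ 2 = ‖t‖ := norm_sq_eq_of_norm_sq_sub_lt <|
    h.trans_le (mul_le_of_le_one_left (norm_nonneg t) (PadicInt.norm_le_one 4))
  have hderiv : ‖2 * x‖ ^ 2 = ‖(4 : ℤ_[p])‖ * ‖t‖ := by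
    rw [← hx, ← norm_pow, ← norm_pow, ← norm_mul]
    congr 1
    ring
  obtain ⟨z, hz, -⟩ := hensels_lemma (p := p) (R := ℤ_[p])
    (F := Polynomial.X ^ 2 - Polynomial.C t) (a := x) (by
      simpa [one_add_one_eq_two, ← norm_mul, hderiv] using h)
  exact ⟨z, sub_eq_zero.1 (by simpa using hz)⟩

lemma exists_sq_eq_of_norm_four_mul_cube_sub_sq_lt {I J : ℤ_[p]}
    (h : ‖4 * I ^ 3 - J ^ 2‖ < ‖(16 : ℤ_[p])‖ * ‖I‖ ^ 3) : ∃ α : ℤ_[p], α ^ 2 = I := by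
  have hfour : (16 : ℤ_[p]) = 4 * 4 := by norm_num
  rw [hfour, norm_mul] at h
  have hlt : ‖J ^ 2 - 4 * I ^ 3‖ < ‖4 * I ^ 3‖ := by
    rw [norm_sub_rev, norm_mul, norm_pow]
    exact h.trans_le (mul_le_mul_of_nonneg_right
      (mul_le_of_le_one_left (norm_nonneg _) (PadicInt.norm_le_one 4)) (by positivity))
  have hdvd : 2 * I ∣ J := by
    rw [dvd_iff_norm_le]
    refine (sq_le_sq₀ (norm_nonneg J) (norm_nonneg _)).1 ?_
    have hexpand : 4 * I ^ 3 = (2 * I) ^ 2 * I := by ring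
    rw [norm_sq_eq_of_norm_sq_sub_lt hlt, hexpand, norm_mul, norm_pow]
    exact mul_le_of_le_one_right (by positivity) (PadicInt.norm_le_one I)
  obtain ⟨x, rfl⟩ := hdvd
  refine exists_sq_eq_of_norm_sq_sub_lt (x := x) ?_
  have hfactor : 4 * I ^ 3 - (2 * I * x) ^ 2 = -(4 * I ^ 2 * (x ^ 2 - I)) := by ring
  rw [hfactor, norm_neg, norm_mul, norm_mul, norm_pow] at h
  refine lt_of_mul_lt_mul_left (h.trans_eq ?_) (by positivity : 0 ≤ ‖(4 : ℤ_[p])‖ * ‖I‖ ^ 2)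
  ring

lemma norm_le_or_norm_le_of_norm_four_mul_cube_sub_sq_le {α J : ℤ_[p]} (hα : α ≠ 0) {q : ℝ}
    (h : ‖4 * (α ^ 2) ^ 3 - J ^ 2‖ ≤ q) :
    ‖2 * α ^ 3 - J‖ ≤ 4 * q / ‖α‖ ^ 3 ∨ ‖2 * α ^ 3 + J‖ ≤ 4 * q / ‖α‖ ^ 3 := by
  have hα3 : 0 < ‖α‖ ^ 3 := pow_pos (norm_pos_iff.2 hα) 3
  have hprod : ‖2 * α ^ 3 - J‖ * ‖2 * α ^ 3 + J‖ ≤ q := by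
    have hfactor : (2 * α ^ 3 - J) * (2 * α ^ 3 + J) = 4 * (α ^ 2) ^ 3 - J ^ 2 := by ring
    rwa [← norm_mul, hfactor]
  have hmax : ‖α‖ ^ 3 / 4 ≤ max ‖2 * α ^ 3 - J‖ ‖2 * α ^ 3 + J‖ := by
    have hsum : 2 * α ^ 3 - J + (2 * α ^ 3 + J) = 4 * α ^ 3 := by ring
    have hle := PadicInt.nonarchimedean (2 * α ^ 3 - J) (2 * α ^ 3 + J)
    have hfour := norm_le_mul_norm_ofNat_mul 4 (α ^ 3)
    rw [hsum] at hle
    rw [norm_pow] at hfour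
    linarith
  simp only [le_div_iff₀ hα3]
  have h₁ := norm_nonneg (2 * α ^ 3 - J)
  have h₂ := norm_nonneg (2 * α ^ 3 + J)
  rcases le_max_iff.1 hmax with hm | hm
  · exact .inr (by nlinarith)
  · exact .inl (by nlinarith)

end SquareRoot

section Fibers

/-- The triples `(b, c, d)` for which, given the leading coefficient `a` and the invariant `I`,
the syzygy is solved by some `J` with `‖4I³ - J²‖ ≤ q`. It contains the `(b, c, d)` of every
quartic form with these `a` and `I` whose discriminant satisfies `‖27Δ‖ ≤ q`. -/
def seminvFiber (a : ℤ_[p]) (q : ℝ) (I : ℤ_[p]) : Set ((ℤ_[p] × ℤ_[p]) × ℤ_[p]) :=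
  {x | ∃ J : ℤ_[p], ‖4 * I ^ 3 - J ^ 2‖ ≤ q ∧
    27 * seminvR a x.1.1 x.1.2 x.2 ^ 2 + seminvH a x.1.1 x.1.2 ^ 3
      - 48 * a ^ 2 * seminvH a x.1.1 x.1.2 * I = -(64 * a ^ 3 * J)}

/-- The quadruples `((b, c, d), I)` with `(b, c, d)` in the fiber `seminvFiber a q I`. -/
def seminvLocus (a : ℤ_[p]) (q : ℝ) : Set (((ℤ_[p] × ℤ_[p]) × ℤ_[p]) × ℤ_[p]) :=
  {y | y.1 ∈ seminvFiber a q y.2}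

lemma isClosed_seminvLocus (a : ℤ_[p]) (q : ℝ) : IsClosed (seminvLocus a q) := by
  have hH := continuous_seminvH a
  have hR := continuous_seminvR a
  have hnorm : IsClosed {z : (((ℤ_[p] × ℤ_[p]) × ℤ_[p]) × ℤ_[p]) × ℤ_[p] |
      ‖4 * z.1.2 ^ 3 - z.2 ^ 2‖ ≤ q} := isClosed_le (by fun_prop) continuous_const
  have hsyzygy : IsClosed {z : (((ℤ_[p] × ℤ_[p]) × ℤ_[p]) × ℤ_[p]) × ℤ_[p] |
      27 * seminvR a z.1.1.1.1 z.1.1.1.2 z.1.1.2 ^ 2 + seminvH a z.1.1.1.1 z.1.1.1.2 ^ 3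
        - 48 * a ^ 2 * seminvH a z.1.1.1.1 z.1.1.1.2 * z.1.2 = -(64 * a ^ 3 * z.2)} := by
    have hH' : Continuous fun z : (((ℤ_[p] × ℤ_[p]) × ℤ_[p]) × ℤ_[p]) × ℤ_[p] =>
        seminvH a z.1.1.1.1 z.1.1.1.2 := hH.comp (by fun_prop)
    have hR' : Continuous fun z : (((ℤ_[p] × ℤ_[p]) × ℤ_[p]) × ℤ_[p]) × ℤ_[p] =>
        seminvR a z.1.1.1.1 z.1.1.1.2 z.1.1.2 := hR.comp (by fun_prop)
    exact isClosed_eq (by fun_prop) (by fun_prop)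
  convert ((hnorm.inter hsyzygy).isCompact.image continuous_fst).isClosed using 1
  ext y
  simp [seminvLocus, seminvFiber]

variable (μ : Measure ℤ_[p]) [IsProbabilityMeasure μ] [μ.IsAddHaarMeasure]

lemma exists_norm_seminv_sq_mul_le_of_mem_seminvFiber_sq {a α : ℤ_[p]} (hα : α ≠ 0) {q : ℝ}
    {x : (ℤ_[p] × ℤ_[p]) × ℤ_[p]} (hx : x ∈ seminvFiber a q (α ^ 2)) :
    ∃ β ∈ ({α, -α} : Set ℤ_[p]), ‖27 * seminvR a x.1.1 x.1.2 x.2 ^ 2 +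
        (seminvH a x.1.1 x.1.2 - 4 * a * β) ^ 2 * (seminvH a x.1.1 x.1.2 - -8 * a * β)‖
      ≤ ‖a‖ ^ 3 * (4 * q / ‖α‖ ^ 3) := by
  obtain ⟨J, hJ, hsyzygy⟩ := hx
  have hscale (w : ℤ_[p]) (hw : ‖w‖ ≤ 4 * q / ‖α‖ ^ 3) :
      ‖64 * (a ^ 3 * w)‖ ≤ ‖a‖ ^ 3 * (4 * q / ‖α‖ ^ 3) := by
    refine (norm_ofNat_mul_le 64 _).trans ?_
    rw [norm_mul, norm_pow]
    gcongr
  rcases norm_le_or_norm_le_of_norm_four_mul_cube_sub_sq_le hα hJ with h | h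
  · refine ⟨α, .inl rfl, ?_⟩
    have hfactor : 27 * seminvR a x.1.1 x.1.2 x.2 ^ 2 + (seminvH a x.1.1 x.1.2 - 4 * a * α) ^ 2 *
        (seminvH a x.1.1 x.1.2 - -8 * a * α) = 64 * (a ^ 3 * (2 * α ^ 3 - J)) := by
      linear_combination hsyzygy
    rw [hfactor]
    exact hscale _ h
  · refine ⟨-α, .inr rfl, ?_⟩
    have hfactor : 27 * seminvR a x.1.1 x.1.2 x.2 ^ 2 + (seminvH a x.1.1 x.1.2 - 4 * a * -α) ^ 2 *
        (seminvH a x.1.1 x.1.2 - -8 * a * -α) = -(64 * (a ^ 3 * (2 * α ^ 3 + J))) := by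
      linear_combination hsyzygy
    rw [hfactor, norm_neg]
    exact hscale _ h

lemma measure_seminvFiber_sq_le {a α : ℤ_[p]} (ha : a ≠ 0) (hα : α ≠ 0) {q : ℝ} (hq : 0 < q)
    (hqa : q ≤ ‖a‖) {n : ℕ} (hn : ((p : ℝ) ^ (-n : ℤ)) ^ 2 ≤ q ^ 3) :
    ((μ.prod μ).prod μ) (seminvFiber a q (α ^ 2))
      ≤ ENNReal.ofReal (3483648 * (n + 1) * q * (‖α‖ ^ 3)⁻¹ * (√‖α‖)⁻¹) := by
  have : 0 < ‖a‖ := norm_pos_iff.2 ha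
  have hα' : 0 < ‖α‖ := norm_pos_iff.2 hα
  set E : ℝ := ‖a‖ ^ 3 * (4 * q / ‖α‖ ^ 3) with hE
  have hnE : ‖a‖ * ‖α‖ * ((p : ℝ) ^ (-n : ℤ)) ^ 2 ≤ E := by
    have hα3 : 4 * q ≤ 4 * q / ‖α‖ ^ 3 :=
      le_div_self (by positivity) (by positivity) (pow_le_one₀ hα'.le (PadicInt.norm_le_one α))
    calc ‖a‖ * ‖α‖ * ((p : ℝ) ^ (-n : ℤ)) ^ 2 ≤ ‖a‖ * 1 * q ^ 3 := by
          gcongr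
          exact PadicInt.norm_le_one α
      _ = ‖a‖ * q ^ 2 * q := by ring
      _ ≤ ‖a‖ * ‖a‖ ^ 2 * (4 * q) := by gcongr; linarith
      _ = ‖a‖ ^ 3 * (4 * q) := by ring
      _ ≤ E := mul_le_mul_of_nonneg_left hα3 (by positivity)
  have hbound (β : ℤ_[p]) (hβ : ‖β‖ = ‖α‖) := measure_seminv_sq_mul_le μ ha
    (norm_pos_iff.1 (hα'.trans_eq hβ.symm)) (by positivity : 0 < E) (hβ ▸ hnE)
  calc _ ≤ _ := measure_mono fun x hx => by
        obtain ⟨β, rfl | rfl, h⟩ := exists_norm_seminv_sq_mul_le_of_mem_seminvFiber_sq hα hx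
        exacts [.inl h, .inr h]
    _ ≤ _ := measure_union_le _ _
    _ ≤ _ := add_le_add (hbound α rfl) (hbound (-α) (norm_neg α))
    _ = _ := by
        rw [norm_neg, ← ENNReal.ofReal_add (by positivity) (by positivity), hE]
        congr 1
        field_simp
        ring

lemma exists_sq_eq_of_nonempty_seminvFiber {a I : ℤ_[p]} {q : ℝ}
    (hI : q < ‖(16 : ℤ_[p])‖ * ‖I‖ ^ 3) (hne : (seminvFiber a q I).Nonempty) :
    ∃ α : ℤ_[p], α ^ 2 = I := by
  obtain ⟨x, J, hJ, -⟩ := hne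
  exact exists_sq_eq_of_norm_four_mul_cube_sub_sq_lt (hJ.trans_lt hI)

lemma exists_measure_seminvFiber_le {a I : ℤ_[p]} (ha : a ≠ 0) {k : ℕ}
    (hak : (p : ℝ) ^ (-(2 * k : ℕ) : ℤ) ≤ ‖a‖)
    (hI : (p : ℝ) ^ (-(2 * k : ℕ) : ℤ) < ‖(16 : ℤ_[p])‖ * ‖I‖ ^ 3)
    (hne : (seminvFiber a ((p : ℝ) ^ (-(2 * k : ℕ) : ℤ)) I).Nonempty) :
    ∃ i, 3 * i < k ∧ ‖I‖ ≤ (((p : ℝ) ^ i) ^ 2)⁻¹ ∧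
      ((μ.prod μ).prod μ) (seminvFiber a ((p : ℝ) ^ (-(2 * k : ℕ) : ℤ)) I) ≤
        ENNReal.ofReal (3483648 * (3 * k + 1) * (p : ℝ) ^ (-(2 * k : ℕ) : ℤ) *
          ((p : ℝ) ^ i) ^ 3 * √((p : ℝ) ^ i)) := by
  have hp : (1 : ℝ) < p := mod_cast (Fact.out : p.Prime).one_lt
  set q : ℝ := (p : ℝ) ^ (-(2 * k : ℕ) : ℤ) with hq
  have hq0 : 0 < q := by positivity
  obtain ⟨α, rfl⟩ := exists_sq_eq_of_nonempty_seminvFiber hI hne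
  have hα : α ≠ 0 := by
    rintro rfl
    norm_num at hI
    exact hI.not_gt hq0
  have hnorm : ‖α‖ = ((p : ℝ) ^ α.valuation)⁻¹ := by
    rw [PadicInt.norm_eq_zpow_neg_valuation hα, zpow_neg, zpow_natCast]
  have hi : 3 * α.valuation < k := by
    have hlt : q < ‖α ^ 2‖ ^ 3 :=
      hI.trans_le (mul_le_of_le_one_left (by positivity) (PadicInt.norm_le_one _))
    rw [norm_pow, hnorm, hq, zpow_neg, zpow_natCast, inv_pow, inv_pow, ← pow_mul, ← pow_mul,
      inv_lt_inv₀ (by positivity) (by positivity), pow_lt_pow_iff_right₀ hp] at hlt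
    lia
  refine ⟨α.valuation, hi, by rw [norm_pow, hnorm, inv_pow], ?_⟩
  have hn : ((p : ℝ) ^ (-(3 * k : ℕ) : ℤ)) ^ 2 ≤ q ^ 3 := by
    rw [hq, ← zpow_natCast, ← zpow_natCast, ← zpow_mul, ← zpow_mul]
    exact (congrArg _ (by push_cast; ring)).le
  refine (measure_seminvFiber_sq_le μ ha hα hq0 hak hn).trans_eq ?_
  rw [hnorm, Real.sqrt_inv, inv_pow, inv_inv, inv_inv]
  push_cast
  rfl

end Fibers

section Locus

variable (μ : Measure ℤ_[p]) [IsProbabilityMeasure μ] [μ.IsAddHaarMeasure]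

lemma sum_range_succ_pow_le {x : ℝ} (hx : 2 ≤ x) (N : ℕ) :
    ∑ i ∈ Finset.range (N + 1), x ^ i ≤ 2 * x ^ N := by
  induction N with
  | zero => simp
  | succ n ih =>
    rw [Finset.sum_range_succ, pow_succ']
    nlinarith [pow_pos (zero_lt_two.trans_le hx) n]

lemma sum_range_succ_mul_pow_mul_sqrt_le {x K : ℝ} (hx : 2 ≤ x) (hK : 0 ≤ K) (N : ℕ) :
    ∑ i ∈ Finset.range (N + 1), K * (x ^ i) ^ 3 * √(x ^ i) * ((x ^ i) ^ 2)⁻¹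
      ≤ K * (2 * (x * √x) ^ N) := by
  have hx0 : 0 < x := by linarith
  have hterm (i : ℕ) : K * (x ^ i) ^ 3 * √(x ^ i) * ((x ^ i) ^ 2)⁻¹ = K * (x * √x) ^ i := by
    have hsqrt : √(x ^ i) = √x ^ i := by
      rw [Real.sqrt_eq_iff_mul_self_eq (by positivity) (by positivity), ← mul_pow,
        Real.mul_self_sqrt hx0.le]
    rw [hsqrt, mul_pow]
    field_simp
  simp only [hterm, ← Finset.mul_sum]
  gcongr
  exact sum_range_succ_pow_le (by nlinarith [Real.one_le_sqrt.2 (by linarith : 1 ≤ x)]) N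

lemma measure_seminvLocus_le {a : ℤ_[p]} (ha : a ≠ 0) {k : ℕ} (hk : 0 < k)
    (hak : (p : ℝ) ^ (-(2 * k : ℕ) : ℤ) ≤ ‖a‖) {K ρ : ℝ} (hK : 0 ≤ K) (hρ : 0 < ρ)
    (hsmall : ∀ I : ℤ_[p], ‖(16 : ℤ_[p])‖ * ‖I‖ ^ 3 ≤ (p : ℝ) ^ (-(2 * k : ℕ) : ℤ) →
      (seminvFiber a ((p : ℝ) ^ (-(2 * k : ℕ) : ℤ)) I).Nonempty → ‖I‖ ≤ ρ ∧
        ((μ.prod μ).prod μ) (seminvFiber a ((p : ℝ) ^ (-(2 * k : ℕ) : ℤ)) I)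
          ≤ ENNReal.ofReal K) :
    (((μ.prod μ).prod μ).prod μ) (seminvLocus a ((p : ℝ) ^ (-(2 * k : ℕ) : ℤ)))
      ≤ ENNReal.ofReal (K * ρ + 6967296 * (3 * k + 1) * (p : ℝ) ^ (-(2 * k : ℕ) : ℤ) *
          (p * √p) ^ ((k - 1) / 3)) := by
  have hp : (2 : ℝ) ≤ p := mod_cast (Fact.out : p.Prime).two_le
  set q : ℝ := (p : ℝ) ^ (-(2 * k : ℕ) : ℤ)
  let c (i : ℕ) : ℝ := 3483648 * (3 * k + 1) * q * ((p : ℝ) ^ i) ^ 3 * √((p : ℝ) ^ i)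
  let r (i : ℕ) : ℝ := (((p : ℝ) ^ i) ^ 2)⁻¹
  have hc (i : ℕ) : 0 ≤ c i := by positivity
  have hcr (i : ℕ) : 0 ≤ c i * r i := by positivity
  rw [Measure.prod_apply_symm (isClosed_seminvLocus a q).measurableSet]
  calc _ ≤ ∑ j ∈ Finset.insertNone (Finset.range ((k - 1) / 3 + 1)),
        ENNReal.ofReal (j.elim K c) * μ {I | ‖I‖ ≤ j.elim ρ r} := by
        refine lintegral_le_sum_mul_measure_of_cover μ _ _ _ fun I hI => ?_
        have hne : (seminvFiber a q I).Nonempty := nonempty_of_measure_ne_zero hI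
        rcases le_or_gt (‖(16 : ℤ_[p])‖ * ‖I‖ ^ 3) q with h | h
        · exact ⟨none, by simp, hsmall I h hne⟩
        · obtain ⟨i, hik, hIi⟩ := exists_measure_seminvFiber_le μ ha hak h hne
          exact ⟨some i, by simp; lia, hIi⟩
    _ = ENNReal.ofReal K * μ {I | ‖I‖ ≤ ρ} + ∑ i ∈ Finset.range ((k - 1) / 3 + 1),
          ENNReal.ofReal (c i) * μ {I | ‖I‖ ≤ r i} := Finset.sum_insertNone _ _
    _ ≤ ENNReal.ofReal K * ENNReal.ofReal ρ + ∑ i ∈ Finset.range ((k - 1) / 3 + 1),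
          ENNReal.ofReal (c i) * ENNReal.ofReal (r i) := by
        gcongr
        · exact measure_norm_le μ hρ
        · exact measure_norm_le μ (by positivity)
    _ = ENNReal.ofReal (K * ρ + ∑ i ∈ Finset.range ((k - 1) / 3 + 1), c i * r i) := by
        rw [ENNReal.ofReal_add (by positivity) (Finset.sum_nonneg fun i _ => hcr i),
          ENNReal.ofReal_mul hK, ENNReal.ofReal_sum_of_nonneg fun i _ => hcr i]
        simp only [ENNReal.ofReal_mul (hc _)]
    _ ≤ _ := by
        gcongr
        refine (sum_range_succ_mul_pow_mul_sqrt_le hp (by positivity) _).trans_eq ?_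
        ring

/-- The set `discDivSetA` of quartic forms with leading coefficient `a` and discriminant divisible
by `p ^ n`, with the coefficients `(b, c, d, e)` in an iterated product rather than in `Fin 4 → ℤ_p`
so that Fubini applies. -/
def discDivSet (a : ℤ_[p]) (n : ℕ) : Set (((ℤ_[p] × ℤ_[p]) × ℤ_[p]) × ℤ_[p]) :=
  {y | (p : ℤ_[p]) ^ n ∣ (BQ.mk a y.1.1.1 y.1.1.2 y.1.2 y.2).disc}

lemma isClosed_discDivSet (a : ℤ_[p]) (n : ℕ) : IsClosed (discDivSet a n) := by
  simp only [discDivSet, pow_dvd_iff_norm_le, BQ.disc]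
  exact isClosed_le (by fun_prop) continuous_const

lemma mem_seminvFiber_of_pow_dvd_disc {f : BQ ℤ_[p]} {n : ℕ} (h : (p : ℤ_[p]) ^ n ∣ f.disc) :
    ((f.b, f.c), f.d) ∈ seminvFiber f.a ((p : ℝ) ^ (-n : ℤ)) f.invI := by
  refine ⟨f.invJ, ?_, syzygy f⟩
  rw [← twentySeven_mul_disc]
  exact (norm_ofNat_mul_le 27 _).trans (pow_dvd_iff_norm_le.1 h)

lemma measure_discDivSet_le_mul_measure_seminvLocus {a : ℤ_[p]} (ha : a ≠ 0) (n : ℕ) :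
    (((μ.prod μ).prod μ).prod μ) (discDivSet a n) ≤
      ENNReal.ofReal (12 * ‖a‖⁻¹) *
        (((μ.prod μ).prod μ).prod μ) (seminvLocus a ((p : ℝ) ^ (-n : ℤ))) := by
  have hL := (isClosed_seminvLocus a ((p : ℝ) ^ (-n : ℤ))).measurableSet
  rw [Measure.prod_apply (isClosed_discDivSet a n).measurableSet, Measure.prod_apply hL,
    ← lintegral_const_mul _ (measurable_measure_prodMk_left hL)]
  refine lintegral_mono fun x => ?_
  have hc : 12 * a ≠ 0 := mul_ne_zero (by norm_num) ha
  calc μ (Prod.mk x ⁻¹' discDivSet a n)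
      ≤ μ {e | 12 * a * e + (-3 * x.1.1 * x.2 + x.1.2 ^ 2) ∈
          Prod.mk x ⁻¹' seminvLocus a ((p : ℝ) ^ (-n : ℤ))} := by
        refine measure_mono fun e he => ?_
        have hmem := mem_seminvFiber_of_pow_dvd_disc he
        simp only [BQ.invI, sub_eq_add_neg, add_assoc, ← neg_mul] at hmem
        exact hmem
    _ ≤ ENNReal.ofReal ‖12 * a‖⁻¹ * μ (Prod.mk x ⁻¹' seminvLocus a ((p : ℝ) ^ (-n : ℤ))) :=
        measure_affine_preimage_le μ hc _ _
    _ ≤ _ := by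
        gcongr
        rw [inv_le_comm₀ (norm_pos_iff.2 hc) (by positivity), mul_inv, inv_inv,
          inv_mul_le_iff₀ (by norm_num)]
        exact norm_le_mul_norm_ofNat_mul 12 a

lemma measure_seminvFiber_le {a I : ℤ_[p]} (ha : a ≠ 0) {q E B r : ℝ} (hE : 0 < E) (hB : 0 < B)
    (hr : 0 < r) {n : ℕ} (hI : ‖a‖ ^ 2 * ‖I‖ < B ^ 2) (hn : (p : ℝ) ^ (-n : ℤ) ≤ B)
    (hBr : ∀ x : ℤ_[p], ‖x‖ < B → ‖x‖ ≤ r)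
    (hJ : ∀ J : ℤ_[p], ‖4 * I ^ 3 - J ^ 2‖ ≤ q → ‖a‖ ^ 3 * ‖J‖ ≤ E) :
    ((μ.prod μ).prod μ) (seminvFiber a q I)
      ≤ ENNReal.ofReal (72576 * (‖a‖ ^ 2)⁻¹ * (√‖a‖)⁻¹ * ((n + 1) * E * (√B)⁻¹ + √E * r)) := by
  refine (measure_mono ?_).trans (measure_seminv_cube_le μ ha hE hB hr hI hn hBr)
  rintro x ⟨J, hJq, hsyzygy⟩
  rw [mem_ofPred_eq, ← add_sub_assoc, hsyzygy, norm_neg, mul_assoc]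
  refine (norm_ofNat_mul_le 64 _).trans ?_
  rw [norm_mul, norm_pow]
  exact hJ J hJq

lemma norm_le_of_norm_sub_sq_le {x y : ℤ_[p]} {r : ℝ} (hr : 0 ≤ r) (hx : ‖x‖ ≤ r ^ 2)
    (h : ‖x - y ^ 2‖ ≤ r ^ 2) : ‖y‖ ≤ r := by
  have hsq := norm_sub_le_max_norm x (x - y ^ 2)
  rw [sub_sub_cancel, norm_pow] at hsq
  exact (pow_le_pow_iff_left₀ (norm_nonneg y) hr two_ne_zero).1 (hsq.trans (max_le hx h))

end Locus

lemma measure_le_ofReal_of_one_le {X : Type*} [MeasurableSpace X] (ν : Measure X)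
    [IsProbabilityMeasure ν] (S : Set X) {x : ℝ} (hx : 1 ≤ x) : ν S ≤ ENNReal.ofReal x :=
  prob_le_one.trans (ENNReal.one_le_ofReal.2 hx)

lemma zpow_neg_mul_natCast {x s : ℝ} {k n : ℕ} (h : x ^ (-k : ℤ) = s ^ n) (m : ℕ) :
    x ^ (-(m * k : ℕ) : ℤ) = s ^ (n * m) := by
  rw [pow_mul, ← h, ← zpow_natCast, ← zpow_mul]
  congr 1
  push_cast
  ring

section LargeExponent

variable (μ : Measure ℤ_[p]) [IsProbabilityMeasure μ] [μ.IsAddHaarMeasure]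

lemma norm_le_three_mul_pow_four {I : ℤ_[p]} {s : ℝ}
    (hI : ‖(16 : ℤ_[p])‖ * ‖I‖ ^ 3 ≤ s ^ 12) : ‖I‖ ≤ 3 * s ^ 4 := by
  rw [← norm_pow, ← norm_mul] at hI
  have h := norm_le_mul_norm_ofNat_mul 16 (I ^ 3)
  rw [norm_pow] at h
  refine (pow_le_pow_iff_left₀ (norm_nonneg I) (by positivity) three_ne_zero).1 ?_
  calc ‖I‖ ^ 3 ≤ 16 * s ^ 12 := h.trans (mul_le_mul_of_nonneg_left hI (by norm_num))
    _ ≤ 27 * s ^ 12 := by gcongr; norm_num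
    _ = (3 * s ^ 4) ^ 3 := by ring

lemma measure_seminvFiber_le_pow_five {a I : ℤ_[p]} (ha : a ≠ 0) {s : ℝ} (hs : 0 < s)
    (hsa : s ^ 12 ≤ ‖a‖) {n : ℕ} (hn : (p : ℝ) ^ (-n : ℤ) ≤ s ^ 18)
    (hI : ‖(16 : ℤ_[p])‖ * ‖I‖ ^ 3 ≤ s ^ 12) :
    ((μ.prod μ).prod μ) (seminvFiber a (s ^ 12) I)
      ≤ ENNReal.ofReal (72576 * (2 * n + 10) * s ^ 5) := by
  have hA : 0 < ‖a‖ := norm_pos_iff.2 ha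
  have hs1 : s ≤ 1 := (pow_le_one_iff_of_nonneg hs.le (by norm_num)).1
    (hsa.trans (PadicInt.norm_le_one a))
  have hJ (J : ℤ_[p]) (hJ : ‖4 * I ^ 3 - J ^ 2‖ ≤ s ^ 12) : ‖J‖ ≤ 4 * s ^ 6 := by
    have hcube : ‖4 * I ^ 3‖ ≤ 4 * s ^ 12 := by
      have h := norm_le_mul_norm_ofNat_mul 4 (4 * I ^ 3)
      rw [← mul_assoc] at h
      norm_num [norm_mul, norm_pow] at h hI ⊢
      linarith
    refine norm_le_of_norm_sub_sq_le (by positivity) (hcube.trans ?_) (hJ.trans ?_) <;>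
      nlinarith [pow_pos hs 12]
  refine (measure_seminvFiber_le μ ha (E := 4 * ‖a‖ ^ 3 * s ^ 6) (B := 4 * ‖a‖ * s ^ 2)
    (by positivity) (by positivity) (by positivity) (n := n) ?_ ?_ (fun _ h => h.le)
    fun J h => ?_).trans (ENNReal.ofReal_le_ofReal ?_)
  · calc ‖a‖ ^ 2 * ‖I‖ ≤ ‖a‖ ^ 2 * (3 * s ^ 4) := by
          gcongr
          exact norm_le_three_mul_pow_four hI
      _ < ‖a‖ ^ 2 * (16 * s ^ 4) := by gcongr; norm_num
      _ = (4 * ‖a‖ * s ^ 2) ^ 2 := by ring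
  · calc (p : ℝ) ^ (-n : ℤ) ≤ s ^ 12 * s ^ 4 * s ^ 2 := hn.trans_eq (by ring)
      _ ≤ ‖a‖ * 4 * s ^ 2 := by
          gcongr
          linarith [pow_le_one₀ hs.le hs1 (n := 4)]
      _ = 4 * ‖a‖ * s ^ 2 := by ring
  · calc ‖a‖ ^ 3 * ‖J‖ ≤ ‖a‖ ^ 3 * (4 * s ^ 6) := by gcongr; exact hJ J h
      _ = 4 * ‖a‖ ^ 3 * s ^ 6 := by ring
  · obtain ⟨x, hx, hxa⟩ : ∃ x > 0, ‖a‖ = x ^ 2 := ⟨√‖a‖, by positivity, (Real.sq_sqrt hA.le).symm⟩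
    have hB : 4 * x ^ 2 * s ^ 2 = (2 * x * s) ^ 2 := by ring
    have hE : 4 * (x ^ 2) ^ 3 * s ^ 6 = (2 * x ^ 3 * s ^ 3) ^ 2 := by ring
    rw [hxa, Real.sqrt_sq hx.le, hE, hB, Real.sqrt_sq (by positivity),
      Real.sqrt_sq (by positivity)]
    apply le_of_eq
    field_simp
    ring

lemma mul_sqrt_pow_le_rpow {x : ℝ} (hx : 1 ≤ x) (k : ℕ) :
    (x * √x) ^ ((k - 1) / 3) ≤ x ^ ((k : ℝ) / 2) := by
  have hx0 : 0 < x := zero_lt_one.trans_le hx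
  have hexp : 3 * ((k - 1) / 3 : ℕ) ≤ (k : ℝ) := by
    have : 3 * ((k - 1) / 3) ≤ k := by lia
    exact_mod_cast this
  have hbase : x * √x = x ^ (3 / 2 : ℝ) := by
    rw [Real.sqrt_eq_rpow, ← Real.rpow_one_add' hx0.le (by norm_num)]
    norm_num
  rw [hbase, ← Real.rpow_natCast, ← Real.rpow_mul hx0.le]
  exact Real.rpow_le_rpow_of_exponent_le hx (by linarith)

lemma measure_discDivSet_le_pow_nine {a : ℤ_[p]} (ha : a ≠ 0) {k : ℕ} (hk : 0 < k)
    (hak : (p : ℝ) ^ (-(2 * k : ℕ) : ℤ) ≤ ‖a‖) {s : ℝ} (hs : 0 < s)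
    (hsk : (p : ℝ) ^ (-k : ℤ) = s ^ 6) (hlayers : s ^ 12 * (p * √p) ^ ((k - 1) / 3) ≤ s ^ 9) :
    (((μ.prod μ).prod μ).prod μ) (discDivSet a (2 * k)) ≤
      ENNReal.ofReal (376233984 * (k * (‖a‖⁻¹ * s ^ 9))) := by
  have hk1 : (1 : ℝ) ≤ k := mod_cast hk
  have hq : (p : ℝ) ^ (-(2 * k : ℕ) : ℤ) = s ^ 12 := zpow_neg_mul_natCast hsk 2
  have hlocus := measure_seminvLocus_le μ ha hk hak (K := 72576 * (6 * k + 10) * s ^ 5)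
    (ρ := 3 * s ^ 4) (by positivity) (by positivity)
  have hmain := measure_discDivSet_le_mul_measure_seminvLocus μ ha (2 * k)
  rw [hq] at hak hlocus hmain
  calc _ ≤ _ := hmain
    _ ≤ _ := mul_le_mul_right (hlocus fun I hI _ => ?_) _
    _ = ENNReal.ofReal (12 * ‖a‖⁻¹ * (217728 * (6 * k + 10 * 1) * s ^ 9 +
          6967296 * (3 * k + 1) * (s ^ 12 * (p * √p) ^ ((k - 1) / 3)))) := by
        rw [← ENNReal.ofReal_mul (by positivity)]
        congr 1
        ring
    _ ≤ ENNReal.ofReal (12 * ‖a‖⁻¹ * (217728 * (6 * k + 10 * k) * s ^ 9 +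
          6967296 * (3 * k + k) * s ^ 9)) := by gcongr
    _ = _ := by
        congr 1
        ring
  refine ⟨norm_le_three_mul_pow_four hI, ?_⟩
  refine (measure_seminvFiber_le_pow_five μ ha hs hak
    (zpow_neg_mul_natCast hsk 3).le hI).trans_eq ?_
  push_cast
  congr 1
  ring

lemma measure_discDivSet_le_rpow {a : ℤ_[p]} (ha : a ≠ 0) {k : ℕ} (hk : 0 < k)
    (hak : (p : ℝ) ^ (-(2 * k : ℕ) : ℤ) ≤ ‖a‖) :
    (((μ.prod μ).prod μ).prod μ) (discDivSet a (2 * k)) ≤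
      ENNReal.ofReal (376233984 * (k * (‖a‖⁻¹ * (p : ℝ) ^ (-(3 * (k : ℝ) / 2))))) := by
  have hp : (1 : ℝ) < p := mod_cast (Fact.out : p.Prime).one_lt
  have hp0 : (0 : ℝ) < p := by linarith
  obtain ⟨s, hs⟩ : ∃ s : ℝ, s = (p : ℝ) ^ (-(k : ℝ) / 6) := ⟨_, rfl⟩
  have hspow (m : ℕ) : s ^ m = (p : ℝ) ^ (-(k : ℝ) / 6 * m) := by
    rw [hs, ← Real.rpow_natCast, ← Real.rpow_mul hp0.le]
  have hsk : (p : ℝ) ^ (-k : ℤ) = s ^ 6 := by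
    rw [hspow, ← Real.rpow_intCast]
    congr 1
    push_cast
    ring
  have hs9 : (p : ℝ) ^ (-(3 * (k : ℝ) / 2)) = s ^ 9 := by
    rw [hspow]
    congr 1
    push_cast
    ring
  rw [hs9]
  refine measure_discDivSet_le_pow_nine μ ha hk hak (hs ▸ by positivity) hsk ?_
  calc s ^ 12 * ((p : ℝ) * √p) ^ ((k - 1) / 3) ≤ s ^ 12 * (p : ℝ) ^ ((k : ℝ) / 2) := by
        gcongr
        exact mul_sqrt_pow_le_rpow hp.le k
    _ = s ^ 9 := by
      rw [hspow, hspow, ← Real.rpow_add hp0]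
      congr 1
      push_cast
      ring

end LargeExponent

section SmallExponent

variable (μ : Measure ℤ_[p]) [IsProbabilityMeasure μ] [μ.IsAddHaarMeasure]

lemma norm_le_norm_mul_inv_of_norm_lt {x a : ℤ_[p]} (h : ‖x‖ < ‖a‖) :
    ‖x‖ ≤ ‖a‖ * (p : ℝ)⁻¹ := by
  have hp : (p : ℝ) ≠ 0 := mod_cast (Fact.out : p.Prime).ne_zero
  have ha : a ≠ 0 := norm_pos_iff.1 ((norm_nonneg x).trans_lt h)
  rw [PadicInt.norm_eq_zpow_neg_valuation ha] at h ⊢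
  rw [← zpow_sub_one₀ hp, PadicInt.norm_le_pow_iff_norm_lt_pow_add_one]
  simpa using h

lemma norm_le_zpow_of_norm_cube_le {x : ℤ_[p]} {k : ℕ} (hk : k ≤ 2)
    (h : ‖x‖ ^ 3 ≤ (p : ℝ) ^ (-(2 * k : ℕ) : ℤ)) : ‖x‖ ≤ (p : ℝ) ^ (-k : ℤ) := by
  rcases eq_or_ne x 0 with rfl | hx
  · rw [norm_zero]
    positivity
  rw [← norm_pow, PadicInt.norm_le_pow_iff_le_valuation _ (pow_ne_zero 3 hx),
    PadicInt.valuation_pow] at h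
  rw [PadicInt.norm_le_pow_iff_le_valuation x hx]
  lia

lemma measure_seminvFiber_le_of_norm_le_sq {a I : ℤ_[p]} (ha : a ≠ 0) {w : ℝ} (hw : 0 < w)
    (hw1 : w < 1) {n : ℕ} (hn : (p : ℝ) ^ (-n : ℤ) ≤ ‖a‖) (hI : ‖I‖ ≤ w ^ 2) :
    ((μ.prod μ).prod μ) (seminvFiber a (w ^ 4) I)
      ≤ ENNReal.ofReal (72576 * ((n + 1) * w ^ 2 + w * (p : ℝ)⁻¹)) := by
  have hA : 0 < ‖a‖ := norm_pos_iff.2 ha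
  have hp : (0 : ℝ) < p := mod_cast (Fact.out : p.Prime).pos
  refine (measure_seminvFiber_le μ ha (E := ‖a‖ ^ 3 * w ^ 2) (by positivity) hA
    (r := ‖a‖ * (p : ℝ)⁻¹) (by positivity) ?_ hn (fun _ h => norm_le_norm_mul_inv_of_norm_lt h)
    fun J hJ => ?_).trans_eq ?_
  · exact mul_lt_of_lt_one_right (by positivity) (hI.trans_lt (pow_lt_one₀ hw.le hw1 two_ne_zero))
  · gcongr
    refine norm_le_of_norm_sub_sq_le (by positivity) ((norm_ofNat_mul_le 4 _).trans ?_)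
      (hJ.trans_eq (by ring))
    calc ‖I ^ 3‖ = ‖I‖ ^ 2 * ‖I‖ := by rw [norm_pow]; ring
      _ ≤ (w ^ 2) ^ 2 * 1 := by gcongr; exact PadicInt.norm_le_one I
      _ = (w ^ 2) ^ 2 := mul_one _
  · obtain ⟨x, hx, hxa⟩ : ∃ x > 0, ‖a‖ = x ^ 2 := ⟨√‖a‖, by positivity, (Real.sq_sqrt hA.le).symm⟩
    have hE : (x ^ 2) ^ 3 * w ^ 2 = (x ^ 3 * w) ^ 2 := by ring
    rw [hxa, Real.sqrt_sq hx.le, hE, Real.sqrt_sq (by positivity)]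
    congr 1
    field_simp

lemma measure_discDivSet_le_zpow_of_ne_two (hp2 : p ≠ 2) {a : ℤ_[p]} (ha : a ≠ 0) {k : ℕ}
    (hk : 0 < k) (hk2 : k ≤ 2) (hak : (p : ℝ) ^ (-(2 * k : ℕ) : ℤ) ≤ ‖a‖) :
    (((μ.prod μ).prod μ).prod μ) (discDivSet a (2 * k)) ≤
      ENNReal.ofReal (590478336 * (‖a‖⁻¹ * (p : ℝ) ^ (-(2 * k : ℕ) : ℤ))) := by
  have hp : (1 : ℝ) < p := mod_cast (Fact.out : p.Prime).one_lt
  have hk2' : (k : ℝ) ≤ 2 := mod_cast hk2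
  obtain ⟨w, hw, hwk⟩ : ∃ w > 0, (p : ℝ) ^ (-k : ℤ) = w ^ 2 :=
    ⟨√((p : ℝ) ^ (-k : ℤ)), by positivity, (Real.sq_sqrt (by positivity)).symm⟩
  have hq : (p : ℝ) ^ (-(2 * k : ℕ) : ℤ) = w ^ 4 := zpow_neg_mul_natCast hwk 2
  rw [zpow_neg, zpow_natCast] at hwk
  have hw1 : w < 1 := by
    rw [← pow_lt_one_iff_of_nonneg hw.le two_ne_zero, ← hwk]
    exact inv_lt_one_of_one_lt₀ (one_lt_pow₀ hp hk.ne')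
  have hpw : (p : ℝ)⁻¹ ≤ w := by
    rw [← pow_le_pow_iff_left₀ (by positivity) hw.le two_ne_zero, ← hwk, inv_pow]
    gcongr
    exact hp.le
  have h16 : ‖(16 : ℤ_[p])‖ = 1 :=
    norm_ofNat_eq_one (((Nat.coprime_primes Fact.out Nat.prime_two).2 hp2).pow_right 4)
  calc _ ≤ _ := measure_discDivSet_le_mul_measure_seminvLocus μ ha (2 * k)
    _ ≤ _ := mul_le_mul_right (measure_seminvLocus_le μ ha hk hak (K := 435456 * w ^ 2)
        (ρ := w ^ 2) (by positivity) (by positivity) fun I hI _ => ?_) _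
    _ = ENNReal.ofReal (12 * ‖a‖⁻¹ * (435456 * w ^ 4 + 6967296 * (3 * k + 1) * w ^ 4)) := by
        have hlayers : (k - 1) / 3 = 0 := by lia
        rw [← ENNReal.ofReal_mul (by positivity), hlayers, hq]
        congr 1
        ring
    _ ≤ ENNReal.ofReal (12 * ‖a‖⁻¹ * (435456 * w ^ 4 + 6967296 * (3 * 2 + 1) * w ^ 4)) := by
        gcongr
    _ = _ := by
        rw [hq]
        congr 1
        ring
  rw [h16, one_mul] at hI
  have hIw : ‖I‖ ≤ w ^ 2 := by
    simpa only [zpow_neg, zpow_natCast, hwk] using norm_le_zpow_of_norm_cube_le hk2 hI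
  refine ⟨hIw, hq ▸ (measure_seminvFiber_le_of_norm_le_sq μ ha hw hw1 hak hIw).trans
    (ENNReal.ofReal_le_ofReal ?_)⟩
  push_cast
  calc 72576 * ((2 * k + 1) * w ^ 2 + w * (p : ℝ)⁻¹) ≤ 72576 * ((2 * 2 + 1) * w ^ 2 + w * w) := by
        gcongr
    _ = 435456 * w ^ 2 := by ring

lemma measure_discDivSet_le_zpow {a : ℤ_[p]} (ha : a ≠ 0) {k : ℕ} (hk : 0 < k) (hk2 : k ≤ 2) :
    (((μ.prod μ).prod μ).prod μ) (discDivSet a (2 * k)) ≤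
      ENNReal.ofReal (590478336 * (‖a‖⁻¹ * (p : ℝ) ^ (-(2 * k : ℕ) : ℤ))) := by
  have hA : 0 < ‖a‖ := norm_pos_iff.2 ha
  rcases lt_or_ge ‖a‖ ((p : ℝ) ^ (-(2 * k : ℕ) : ℤ)) with hak | hak
  · have hratio := (one_le_inv_mul₀ hA).2 hak.le
    exact measure_le_ofReal_of_one_le _ _ (by linarith)
  rcases eq_or_ne p 2 with rfl | hp2
  · have hA1 : 1 ≤ ‖a‖⁻¹ := (one_le_inv₀ hA).2 (PadicInt.norm_le_one a)
    refine measure_le_ofReal_of_one_le _ _ ?_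
    calc (1 : ℝ) ≤ 590478336 * (1 * (2 : ℝ) ^ (-4 : ℤ)) := by norm_num
      _ ≤ 590478336 * (‖a‖⁻¹ * ((2 : ℕ) : ℝ) ^ (-(2 * k : ℕ) : ℤ)) := by
        push_cast
        gcongr <;> grind
  · exact measure_discDivSet_le_zpow_of_ne_two μ hp2 ha hk hk2 hak

end SmallExponent

section QuadraticReduction

variable {A : Type*} [CommRing A]

/-- The coefficient of `e ^ 2` in the discriminant of `(a, b, c, d, e)`, taken modulo `a ^ 2`. -/
def discCoeff₂ (a b c : A) : A := -27 * b ^ 4 + a * (144 * b ^ 2 * c)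

/-- The coefficient of `e` in the discriminant of `(a, b, c, d, e)`, taken modulo `a ^ 2`. -/
def discCoeff₁ (a b c d : A) : A :=
  18 * b ^ 3 * c * d - 4 * b ^ 2 * c ^ 3 +
    a * (-6 * b ^ 2 * d ^ 2 - 80 * b * c ^ 2 * d + 16 * c ^ 4)

/-- The constant coefficient in `e` of the discriminant of `(a, b, c, d, e)`, taken modulo
`a ^ 2`. -/
def discCoeff₀ (a b c d : A) : A :=
  b ^ 2 * c ^ 2 * d ^ 2 - 4 * b ^ 3 * d ^ 3 + a * (18 * b * c * d ^ 3 - 4 * c ^ 3 * d ^ 2)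

/-- The discriminant of the discriminant of `(a, b, c, d, e)`, the latter being regarded modulo
`a ^ 2` as a quadratic polynomial in `e`. -/
def discDisc (a b c d : A) : A :=
  discCoeff₁ a b c d ^ 2 - 4 * discCoeff₂ a b c * discCoeff₀ a b c d

lemma sq_dvd_four_mul_discCoeff₂_mul_disc_sub (f : BQ A) :
    f.a ^ 2 ∣ 4 * discCoeff₂ f.a f.b f.c * f.disc -
      ((2 * discCoeff₂ f.a f.b f.c * f.e + discCoeff₁ f.a f.b f.c f.d) ^ 2 -
        discDisc f.a f.b f.c f.d) := by
  refine ⟨4 * discCoeff₂ f.a f.b f.c *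
    (256 * f.a * f.e ^ 3 - 192 * f.b * f.d * f.e ^ 2 - 128 * f.c ^ 2 * f.e ^ 2 +
      144 * f.c * f.d ^ 2 * f.e - 27 * f.d ^ 4), ?_⟩
  simp only [discDisc, discCoeff₂, discCoeff₁, discCoeff₀, BQ.disc]
  ring

lemma dvd_discDisc_add (a b c d : A) :
    a ∣ discDisc a b c d + 2 ^ 4 * b ^ 4 * (3 * b * d - c ^ 2) ^ 3 := by
  refine ⟨2 * (18 * b ^ 3 * c * d - 4 * b ^ 2 * c ^ 3) *
      (-6 * b ^ 2 * d ^ 2 - 80 * b * c ^ 2 * d + 16 * c ^ 4) +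
    a * (-6 * b ^ 2 * d ^ 2 - 80 * b * c ^ 2 * d + 16 * c ^ 4) ^ 2 +
    4 * (27 * b ^ 4) * (18 * b * c * d ^ 3 - 4 * c ^ 3 * d ^ 2) -
    4 * (144 * b ^ 2 * c) * (b ^ 2 * c ^ 2 * d ^ 2 - 4 * b ^ 3 * d ^ 3) -
    4 * a * (144 * b ^ 2 * c) * (18 * b * c * d ^ 3 - 4 * c ^ 3 * d ^ 2), ?_⟩
  simp only [discDisc, discCoeff₂, discCoeff₁, discCoeff₀]
  ring

lemma sq_dvd_disc_sub {π : A} {f : BQ A} (ha : π ∣ f.a) (hb : π ∣ f.b) :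
    π ^ 2 ∣ f.disc - 4 * f.a * f.c ^ 3 * (4 * f.c * f.e - f.d ^ 2) := by
  obtain ⟨α, hα⟩ := ha
  obtain ⟨β, hβ⟩ := hb
  refine ⟨α ^ 2 * (256 * f.a * f.e ^ 3 - 192 * f.b * f.d * f.e ^ 2 - 128 * f.c ^ 2 * f.e ^ 2 +
      144 * f.c * f.d ^ 2 * f.e - 27 * f.d ^ 4) +
    α * β * (144 * f.b * f.c * f.e ^ 2 - 6 * f.b * f.d ^ 2 * f.e - 80 * f.c ^ 2 * f.d * f.e +
      18 * f.c * f.d ^ 3) +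
    β ^ 2 * (-27 * f.b ^ 2 * f.e ^ 2 + 18 * f.b * f.c * f.d * f.e - 4 * f.b * f.d ^ 3 -
      4 * f.c ^ 3 * f.e + f.c ^ 2 * f.d ^ 2), ?_⟩
  simp only [BQ.disc, hα, hβ]
  ring

lemma sq_dvd_discCoeff_sq_sub_discDisc {π : A} {f : BQ A} (ha : π ∣ f.a) (h : π ^ 2 ∣ f.disc) :
    π ^ 2 ∣ (2 * discCoeff₂ f.a f.b f.c * f.e + discCoeff₁ f.a f.b f.c f.d) ^ 2 -
      discDisc f.a f.b f.c f.d :=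
  (dvd_sub_right (h.mul_left _)).1
    ((pow_dvd_pow_of_dvd ha 2).trans (sq_dvd_four_mul_discCoeff₂_mul_disc_sub f))

end QuadraticReduction

section Divisibility

lemma not_dvd_ofNat {n : ℕ} [n.AtLeastTwo] (hn : n.Prime) (h : p ≠ n) :
    ¬ (p : ℤ_[p]) ∣ ofNat(n) := by
  rw [← PadicInt.norm_lt_one_iff_dvd, not_lt]
  exact (norm_ofNat_eq_one ((Nat.coprime_primes Fact.out hn).2 h)).ge

lemma norm_eq_one_of_not_dvd {x : ℤ_[p]} (h : ¬ (p : ℤ_[p]) ∣ x) : ‖x‖ = 1 := by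
  rw [← PadicInt.norm_lt_one_iff_dvd, not_lt] at h
  exact (PadicInt.norm_le_one x).antisymm h

lemma not_dvd_two_mul_discCoeff₂ (hp2 : p ≠ 2) (hp3 : p ≠ 3) {a b : ℤ_[p]}
    (ha : (p : ℤ_[p]) ∣ a) (hb : ¬ (p : ℤ_[p]) ∣ b) (c : ℤ_[p]) :
    ¬ (p : ℤ_[p]) ∣ 2 * discCoeff₂ a b c := by
  have hp : Prime (p : ℤ_[p]) := PadicInt.prime_p
  intro h
  have hcoeff := (hp.dvd_or_dvd h).resolve_left (not_dvd_ofNat Nat.prime_two hp2)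
  rw [discCoeff₂, dvd_add_left (ha.mul_right _), neg_mul, dvd_neg] at hcoeff
  have h27 : (27 : ℤ_[p]) = 3 ^ 3 := by norm_num
  rw [h27] at hcoeff
  rcases hp.dvd_or_dvd hcoeff with h | h
  · exact not_dvd_ofNat Nat.prime_three hp3 (hp.dvd_of_dvd_pow h)
  · exact hb (hp.dvd_of_dvd_pow h)

lemma dvd_three_mul_sub_sq_of_dvd_discDisc (hp2 : p ≠ 2) {a b c d : ℤ_[p]}
    (ha : (p : ℤ_[p]) ∣ a) (hb : ¬ (p : ℤ_[p]) ∣ b) (h : (p : ℤ_[p]) ∣ discDisc a b c d) :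
    (p : ℤ_[p]) ∣ 3 * b * d - c ^ 2 := by
  have hp : Prime (p : ℤ_[p]) := PadicInt.prime_p
  rcases hp.dvd_or_dvd ((dvd_add_right h).1 (ha.trans (dvd_discDisc_add a b c d))) with h | h
  · rcases hp.dvd_or_dvd h with h | h
    · exact absurd (hp.dvd_of_dvd_pow h) (not_dvd_ofNat Nat.prime_two hp2)
    · exact absurd (hp.dvd_of_dvd_pow h) hb
  · exact hp.dvd_of_dvd_pow h

lemma dvd_or_dvd_of_sq_dvd_disc (hp2 : p ≠ 2) {f : BQ ℤ_[p]} {u : ℤ_[p]} (hu : IsUnit u)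
    (ha : f.a = u * p) (hb : (p : ℤ_[p]) ∣ f.b) (h : (p : ℤ_[p]) ^ 2 ∣ f.disc) :
    (p : ℤ_[p]) ∣ f.c ∨ (p : ℤ_[p]) ∣ 4 * f.c * f.e - f.d ^ 2 := by
  have hp : Prime (p : ℤ_[p]) := PadicInt.prime_p
  have hmain := (dvd_sub_right h).1 (sq_dvd_disc_sub (ha ▸ dvd_mul_left _ _) hb)
  have hfactor : 4 * f.a * f.c ^ 3 * (4 * f.c * f.e - f.d ^ 2) =
      u * (p * (2 ^ 2 * f.c ^ 3 * (4 * f.c * f.e - f.d ^ 2))) := by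
    rw [ha]
    ring
  rw [hfactor, hu.dvd_mul_left, pow_two, mul_dvd_mul_iff_left hp.ne_zero] at hmain
  refine (hp.dvd_or_dvd hmain).imp_left fun h => ?_
  rcases hp.dvd_or_dvd h with h | h
  · exact absurd (hp.dvd_of_dvd_pow h) (not_dvd_ofNat Nat.prime_two hp2)
  · exact hp.dvd_of_dvd_pow h

lemma measurable_dvd {X : Type*} [TopologicalSpace X] [MeasurableSpace X] [OpensMeasurableSpace X]
    (c : ℤ_[p]) {g : X → ℤ_[p]} (hg : Continuous g) : Measurable fun x => c ∣ g x := by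
  simp only [dvd_iff_norm_le]
  exact measurableSet_setOfPred.1 (isClosed_le hg.norm continuous_const).measurableSet

variable (μ : Measure ℤ_[p]) [IsProbabilityMeasure μ] [μ.IsAddHaarMeasure]

lemma measure_dvd_affine_le {c : ℤ_[p]} (hc : ¬ (p : ℤ_[p]) ∣ c) (β : ℤ_[p]) :
    μ {x | (p : ℤ_[p]) ∣ c * x + β} ≤ ENNReal.ofReal (p : ℝ)⁻¹ := by
  have hp : (0 : ℝ) < p := mod_cast (Fact.out : p.Prime).pos
  have hc0 : c ≠ 0 := fun h => hc (h ▸ dvd_zero _)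
  have h := measure_norm_affine_le μ hc0 β (inv_pos.2 hp)
  simpa only [norm_eq_one_of_not_dvd hc, inv_one, one_mul, dvd_iff_norm_le, PadicInt.norm_p] using h

lemma measure_dvd_le : μ {x | (p : ℤ_[p]) ∣ x} ≤ ENNReal.ofReal (p : ℝ)⁻¹ := by
  simpa only [one_mul, add_zero] using
    measure_dvd_affine_le μ (PadicInt.prime_p (p := p)).not_dvd_one 0

lemma measure_sq_dvd_affine_sq_sub_le {c : ℤ_[p]} (hc : ¬ (p : ℤ_[p]) ∣ c) (β t : ℤ_[p]) :
    μ {x | (p : ℤ_[p]) ^ 2 ∣ (c * x + β) ^ 2 - t} ≤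
      ENNReal.ofReal (4 * (p : ℝ)⁻¹ ^ 2 / max (√‖t‖) (p : ℝ)⁻¹) := by
  have hp : (0 : ℝ) < p := mod_cast (Fact.out : p.Prime).pos
  have hc0 : c ≠ 0 := fun h => hc (h ▸ dvd_zero _)
  have h := measure_norm_affine_sq_sub_le μ hc0 β t (E := (p : ℝ)⁻¹ ^ 2) (by positivity)
  rw [norm_eq_one_of_not_dvd hc, inv_one, mul_one, Real.sqrt_sq (by positivity)] at h
  simpa only [dvd_iff_norm_le, norm_pow, PadicInt.norm_p] using h

lemma measure_sq_dvd_affine_sq_sub_le_inv {c : ℤ_[p]} (hc : ¬ (p : ℤ_[p]) ∣ c) (β t : ℤ_[p]) :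
    μ {x | (p : ℤ_[p]) ^ 2 ∣ (c * x + β) ^ 2 - t} ≤ ENNReal.ofReal (4 * (p : ℝ)⁻¹) := by
  have hp : (0 : ℝ) < p := mod_cast (Fact.out : p.Prime).pos
  refine (measure_sq_dvd_affine_sq_sub_le μ hc β t).trans (ENNReal.ofReal_le_ofReal ?_)
  calc _ ≤ 4 * (p : ℝ)⁻¹ ^ 2 / (p : ℝ)⁻¹ := by
        gcongr
        exact le_max_right _ _
    _ = 4 * (p : ℝ)⁻¹ := by field_simp

lemma measure_sq_dvd_affine_sq_sub_le_inv_sq {c t : ℤ_[p]} (hc : ¬ (p : ℤ_[p]) ∣ c) (β : ℤ_[p])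
    (ht : ¬ (p : ℤ_[p]) ∣ t) :
    μ {x | (p : ℤ_[p]) ^ 2 ∣ (c * x + β) ^ 2 - t} ≤ ENNReal.ofReal (4 * (p : ℝ)⁻¹ ^ 2) := by
  refine (measure_sq_dvd_affine_sq_sub_le μ hc β t).trans (ENNReal.ofReal_le_ofReal ?_)
  rw [norm_eq_one_of_not_dvd ht, Real.sqrt_one]
  exact div_le_self (by positivity) (le_max_left _ _)

end Divisibility

section SquareDivisibility

variable (μ : Measure ℤ_[p]) [IsProbabilityMeasure μ] [μ.IsAddHaarMeasure]

lemma measure_prod_fst_preimage {X Y : Type*} [MeasurableSpace X] [MeasurableSpace Y]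
    (μ : Measure X) (ν : Measure Y) [IsProbabilityMeasure ν] [SFinite μ] (P : Set X) :
    μ.prod ν (Prod.fst ⁻¹' P) = μ P := by
  rw [← prod_univ, Measure.prod_prod, measure_univ, mul_one]

/-- The coefficient tuples `(b, c, d, e)` for which the reduction modulo `a ^ 2` of
`4 * discCoeff₂ a b c * Δ`, after completing the square in `e`, is divisible by `p ^ 2`. -/
def discQuadSet (a : ℤ_[p]) : Set (((ℤ_[p] × ℤ_[p]) × ℤ_[p]) × ℤ_[p]) :=
  {y | (p : ℤ_[p]) ^ 2 ∣
    (2 * discCoeff₂ a y.1.1.1 y.1.1.2 * y.2 + discCoeff₁ a y.1.1.1 y.1.1.2 y.1.2) ^ 2 -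
      discDisc a y.1.1.1 y.1.1.2 y.1.2}

lemma measurableSet_discQuadSet (a : ℤ_[p]) : MeasurableSet (discQuadSet a) := by
  unfold discQuadSet discDisc discCoeff₂ discCoeff₁ discCoeff₀
  exact measurableSet_setOfPred.2 (measurable_dvd _ (by fun_prop))

lemma discDivSet_two_subset_discQuadSet {a : ℤ_[p]} (ha : (p : ℤ_[p]) ∣ a) :
    discDivSet a 2 ⊆ discQuadSet a := fun y hy =>
  sq_dvd_discCoeff_sq_sub_discDisc (f := BQ.mk a y.1.1.1 y.1.1.2 y.1.2 y.2) ha hy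

lemma measure_discQuadSet_inter_le (hp2 : p ≠ 2) (hp3 : p ≠ 3) {a : ℤ_[p]}
    (ha : (p : ℤ_[p]) ∣ a) {P : Set ((ℤ_[p] × ℤ_[p]) × ℤ_[p])} (hPm : MeasurableSet P)
    (hP : ∀ x ∈ P, ¬ (p : ℤ_[p]) ∣ x.1.1) :
    (((μ.prod μ).prod μ).prod μ) (Prod.fst ⁻¹' P ∩ discQuadSet a) ≤
      ENNReal.ofReal (4 * (p : ℝ)⁻¹) * ((μ.prod μ).prod μ) P :=
  measure_prod_le_mul_of_fiber_le _ μ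
    ((measurable_fst hPm).inter (measurableSet_discQuadSet a)) (fun _ _ h => h.1)
    fun x hx => (measure_mono fun _ he => he.2).trans (measure_sq_dvd_affine_sq_sub_le_inv μ
      (not_dvd_two_mul_discCoeff₂ hp2 hp3 ha (hP x hx) x.1.2)
      (discCoeff₁ a x.1.1 x.1.2 x.2) (discDisc a x.1.1 x.1.2 x.2))

lemma measure_prod_dvd_fst_le :
    ((μ.prod μ).prod μ) {x | (p : ℤ_[p]) ∣ x.1.1} ≤ ENNReal.ofReal (p : ℝ)⁻¹ :=
  calc _ = (μ.prod μ) {x | (p : ℤ_[p]) ∣ x.1} := measure_prod_fst_preimage _ μ _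
    _ = μ {b | (p : ℤ_[p]) ∣ b} := measure_prod_fst_preimage μ μ {b | (p : ℤ_[p]) ∣ b}
    _ ≤ _ := measure_dvd_le μ

lemma measure_discDivSet_two_le_inv {a : ℤ_[p]} (ha : (p : ℤ_[p]) ∣ a) :
    (((μ.prod μ).prod μ).prod μ) (discDivSet a 2) ≤ ENNReal.ofReal (5 * (p : ℝ)⁻¹) := by
  have hp0 : (0 : ℝ) < p := mod_cast (Fact.out : p.Prime).pos
  rcases le_or_gt p 3 with hp | hp
  · have hp' : (p : ℝ) ≤ 3 := mod_cast hp
    refine measure_le_ofReal_of_one_le _ _ ?_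
    rw [← div_eq_mul_inv, le_div_iff₀ hp0]
    linarith
  have hp2 : p ≠ 2 := by lia
  have hp3 : p ≠ 3 := hp.ne'
  have hcover : discDivSet a 2 ⊆ Prod.fst ⁻¹' {x | (p : ℤ_[p]) ∣ x.1.1} ∪
      Prod.fst ⁻¹' {x | ¬ (p : ℤ_[p]) ∣ x.1.1} ∩ discQuadSet a := fun y hy =>
    (em ((p : ℤ_[p]) ∣ y.1.1.1)).imp id fun hb =>
      And.intro hb (discDivSet_two_subset_discQuadSet ha hy)
  have hunit := measure_discQuadSet_inter_le μ hp2 hp3 ha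
    (measurableSet_setOfPred.2 (measurable_dvd (p : ℤ_[p]) (by fun_prop)).not) fun _ hx => hx
  calc _ ≤ _ := measure_mono hcover
    _ ≤ _ := measure_union_le _ _
    _ ≤ ENNReal.ofReal (p : ℝ)⁻¹ + ENNReal.ofReal (4 * (p : ℝ)⁻¹) * 1 :=
        add_le_add ((measure_prod_fst_preimage _ μ _).trans_le (measure_prod_dvd_fst_le μ))
          (hunit.trans (mul_le_mul_right prob_le_one _))
    _ = _ := by
        rw [mul_one, ← ENNReal.ofReal_add (by positivity) (by positivity)]
        congr 1
        ring

lemma measure_dvd_and_dvd_le :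
    (((μ.prod μ).prod μ).prod μ) {y | (p : ℤ_[p]) ∣ y.1.1.1 ∧ (p : ℤ_[p]) ∣ y.1.1.2} ≤
      ENNReal.ofReal ((p : ℝ)⁻¹ ^ 2) := by
  calc _ = ((μ.prod μ).prod μ) {x | (p : ℤ_[p]) ∣ x.1.1 ∧ (p : ℤ_[p]) ∣ x.1.2} :=
        measure_prod_fst_preimage _ μ _
    _ = (μ.prod μ) ({b | (p : ℤ_[p]) ∣ b} ×ˢ {c | (p : ℤ_[p]) ∣ c}) :=
        measure_prod_fst_preimage _ μ ({b | (p : ℤ_[p]) ∣ b} ×ˢ {c | (p : ℤ_[p]) ∣ c})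
    _ ≤ ENNReal.ofReal (p : ℝ)⁻¹ * ENNReal.ofReal (p : ℝ)⁻¹ := by
        rw [Measure.prod_prod]
        exact mul_le_mul' (measure_dvd_le μ) (measure_dvd_le μ)
    _ = _ := by rw [← ENNReal.ofReal_mul (by positivity), ← pow_two]

lemma measure_dvd_and_dvd_four_mul_sub_sq_le (hp2 : p ≠ 2) :
    (((μ.prod μ).prod μ).prod μ) {y | (p : ℤ_[p]) ∣ y.1.1.1 ∧ ¬ (p : ℤ_[p]) ∣ y.1.1.2 ∧
      (p : ℤ_[p]) ∣ 4 * y.1.1.2 * y.2 - y.1.2 ^ 2} ≤ ENNReal.ofReal ((p : ℝ)⁻¹ ^ 2) := by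
  have hp : Prime (p : ℤ_[p]) := PadicInt.prime_p
  have h4 : ¬ (p : ℤ_[p]) ∣ 4 := by
    rw [(by norm_num : (4 : ℤ_[p]) = 2 ^ 2)]
    exact fun h => not_dvd_ofNat Nat.prime_two hp2 (hp.dvd_of_dvd_pow h)
  have hmeas := measurableSet_setOfPred.2 ((measurable_dvd (X := ((ℤ_[p] × ℤ_[p]) × ℤ_[p]) × ℤ_[p])
    (p : ℤ_[p]) (g := fun y => y.1.1.1) (by fun_prop)).and
    ((measurable_dvd (p : ℤ_[p]) (g := fun y => y.1.1.2) (by fun_prop)).not.and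
    (measurable_dvd (p : ℤ_[p]) (g := fun y => 4 * y.1.1.2 * y.2 - y.1.2 ^ 2) (by fun_prop))))
  calc _ ≤ ENNReal.ofReal (p : ℝ)⁻¹ *
          ((μ.prod μ).prod μ) {x | (p : ℤ_[p]) ∣ x.1.1 ∧ ¬ (p : ℤ_[p]) ∣ x.1.2} := by
        refine measure_prod_le_mul_of_fiber_le _ μ hmeas (fun _ _ h => And.intro h.1 h.2.1)
          fun x hx => (measure_mono fun e he => ?_).trans (measure_dvd_affine_le μ
            (fun h => (hp.dvd_or_dvd h).elim h4 hx.2) (-x.2 ^ 2))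
        simpa only [mem_ofPred_eq, sub_eq_add_neg] using he.2.2
    _ ≤ ENNReal.ofReal (p : ℝ)⁻¹ * ENNReal.ofReal (p : ℝ)⁻¹ := by
        gcongr
        exact (measure_mono fun _ hx => hx.1).trans (measure_prod_dvd_fst_le μ)
    _ = _ := by rw [← ENNReal.ofReal_mul (by positivity), ← pow_two]

lemma measure_discQuadSet_of_not_dvd_discDisc_le (hp2 : p ≠ 2) (hp3 : p ≠ 3) {a : ℤ_[p]}
    (ha : (p : ℤ_[p]) ∣ a) :
    (((μ.prod μ).prod μ).prod μ) (Prod.fst ⁻¹' {x | ¬ (p : ℤ_[p]) ∣ x.1.1 ∧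
      ¬ (p : ℤ_[p]) ∣ discDisc a x.1.1 x.1.2 x.2} ∩ discQuadSet a) ≤
      ENNReal.ofReal (4 * (p : ℝ)⁻¹ ^ 2) := by
  have hmeas : MeasurableSet {x : (ℤ_[p] × ℤ_[p]) × ℤ_[p] | ¬ (p : ℤ_[p]) ∣ x.1.1 ∧
      ¬ (p : ℤ_[p]) ∣ discDisc a x.1.1 x.1.2 x.2} := by
    unfold discDisc discCoeff₂ discCoeff₁ discCoeff₀
    exact measurableSet_setOfPred.2 ((measurable_dvd _ (by fun_prop)).not.and
      (measurable_dvd _ (by fun_prop)).not)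
  refine (measure_prod_le_mul_of_fiber_le _ μ
    ((measurable_fst hmeas).inter (measurableSet_discQuadSet a)) (fun _ _ h => h.1)
    fun x hx => (measure_mono fun _ he => he.2).trans (measure_sq_dvd_affine_sq_sub_le_inv_sq μ
      (not_dvd_two_mul_discCoeff₂ hp2 hp3 ha hx.1 x.1.2) (discCoeff₁ a x.1.1 x.1.2 x.2)
      hx.2)).trans ?_
  exact mul_le_of_le_one_right zero_le prob_le_one

lemma measure_discQuadSet_of_dvd_three_mul_sub_sq_le (hp2 : p ≠ 2) (hp3 : p ≠ 3) {a : ℤ_[p]}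
    (ha : (p : ℤ_[p]) ∣ a) :
    (((μ.prod μ).prod μ).prod μ) (Prod.fst ⁻¹' {x | ¬ (p : ℤ_[p]) ∣ x.1.1 ∧
      (p : ℤ_[p]) ∣ 3 * x.1.1 * x.2 - x.1.2 ^ 2} ∩ discQuadSet a) ≤
      ENNReal.ofReal (4 * (p : ℝ)⁻¹ ^ 2) := by
  have hp : Prime (p : ℤ_[p]) := PadicInt.prime_p
  have hmeas : MeasurableSet {x : (ℤ_[p] × ℤ_[p]) × ℤ_[p] | ¬ (p : ℤ_[p]) ∣ x.1.1 ∧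
      (p : ℤ_[p]) ∣ 3 * x.1.1 * x.2 - x.1.2 ^ 2} :=
    measurableSet_setOfPred.2 ((measurable_dvd _ (by fun_prop)).not.and
      (measurable_dvd _ (by fun_prop)))
  have hbase : ((μ.prod μ).prod μ) {x | ¬ (p : ℤ_[p]) ∣ x.1.1 ∧
      (p : ℤ_[p]) ∣ 3 * x.1.1 * x.2 - x.1.2 ^ 2} ≤ ENNReal.ofReal (p : ℝ)⁻¹ := by
    refine (measure_prod_le_mul_of_fiber_le _ μ hmeas (P := {x | ¬ (p : ℤ_[p]) ∣ x.1})
      (fun _ _ h => h.1) fun x hx => (measure_mono fun d hd => ?_).trans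
      (measure_dvd_affine_le μ (fun h => (hp.dvd_or_dvd h).elim
        (not_dvd_ofNat Nat.prime_three hp3) hx) (-x.2 ^ 2))).trans
      (mul_le_of_le_one_right zero_le prob_le_one)
    simpa only [mem_ofPred_eq, sub_eq_add_neg] using hd.2
  calc _ ≤ _ := measure_discQuadSet_inter_le μ hp2 hp3 ha hmeas fun _ hx => hx.1
    _ ≤ ENNReal.ofReal (4 * (p : ℝ)⁻¹) * ENNReal.ofReal (p : ℝ)⁻¹ := mul_le_mul_right hbase _
    _ = _ := by rw [← ENNReal.ofReal_mul (by positivity), mul_assoc, ← pow_two]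

lemma discDivSet_two_subset (hp2 : p ≠ 2) {u : ℤ_[p]} (hu : IsUnit u) :
    discDivSet (u * (p : ℤ_[p])) 2 ⊆
      ({y | (p : ℤ_[p]) ∣ y.1.1.1 ∧ (p : ℤ_[p]) ∣ y.1.1.2} ∪
        {y | (p : ℤ_[p]) ∣ y.1.1.1 ∧ ¬ (p : ℤ_[p]) ∣ y.1.1.2 ∧
          (p : ℤ_[p]) ∣ 4 * y.1.1.2 * y.2 - y.1.2 ^ 2}) ∪
      (Prod.fst ⁻¹' {x | ¬ (p : ℤ_[p]) ∣ x.1.1 ∧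
          ¬ (p : ℤ_[p]) ∣ discDisc (u * (p : ℤ_[p])) x.1.1 x.1.2 x.2} ∩
            discQuadSet (u * (p : ℤ_[p])) ∪
        Prod.fst ⁻¹' {x | ¬ (p : ℤ_[p]) ∣ x.1.1 ∧
          (p : ℤ_[p]) ∣ 3 * x.1.1 * x.2 - x.1.2 ^ 2} ∩ discQuadSet (u * (p : ℤ_[p]))) := by
  intro y hy
  have ha : (p : ℤ_[p]) ∣ u * p := dvd_mul_left _ _
  by_cases hb : (p : ℤ_[p]) ∣ y.1.1.1
  · left
    by_cases hc : (p : ℤ_[p]) ∣ y.1.1.2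
    · exact .inl (And.intro hb hc)
    · exact .inr (And.intro hb (And.intro hc
        ((dvd_or_dvd_of_sq_dvd_disc hp2 (f := BQ.mk (u * p) y.1.1.1 y.1.1.2 y.1.2 y.2) hu rfl hb
          hy).resolve_left hc)))
  · right
    have hquad := discDivSet_two_subset_discQuadSet ha hy
    by_cases ht : (p : ℤ_[p]) ∣ discDisc (u * (p : ℤ_[p])) y.1.1.1 y.1.1.2 y.1.2
    · exact .inr (And.intro
        (And.intro hb (dvd_three_mul_sub_sq_of_dvd_discDisc hp2 ha hb ht)) hquad)
    · exact .inl (And.intro (And.intro hb ht) hquad)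

lemma measure_discDivSet_two_le_inv_sq {u : ℤ_[p]} (hu : IsUnit u) :
    (((μ.prod μ).prod μ).prod μ) (discDivSet (u * (p : ℤ_[p])) 2) ≤
      ENNReal.ofReal (10 * (p : ℝ)⁻¹ ^ 2) := by
  have hp0 : (0 : ℝ) < p := mod_cast (Fact.out : p.Prime).pos
  rcases le_or_gt p 3 with hp | hp
  · have hp' : (p : ℝ) ≤ 3 := mod_cast hp
    refine measure_le_ofReal_of_one_le _ _ ?_
    rw [inv_pow, ← div_eq_mul_inv, le_div_iff₀ (by positivity)]
    nlinarith
  have hp2 : p ≠ 2 := by lia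
  have hp3 : p ≠ 3 := hp.ne'
  have ha : (p : ℤ_[p]) ∣ u * p := dvd_mul_left _ _
  calc _ ≤ _ := measure_mono (discDivSet_two_subset hp2 hu)
    _ ≤ _ := (measure_union_le _ _).trans
        (add_le_add (measure_union_le _ _) (measure_union_le _ _))
    _ ≤ _ := add_le_add
        (add_le_add (measure_dvd_and_dvd_le μ) (measure_dvd_and_dvd_four_mul_sub_sq_le μ hp2))
        (add_le_add (measure_discQuadSet_of_not_dvd_discDisc_le μ hp2 hp3 ha)
          (measure_discQuadSet_of_dvd_three_mul_sub_sq_le μ hp2 hp3 ha))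
    _ = _ := by
        repeat rw [← ENNReal.ofReal_add (by positivity) (by positivity)]
        congr 1
        ring

end SquareDivisibility

section CoefficientCoordinates

lemma isAddHaarMeasure_of_map_add_left_eq {G : Type*} [AddGroup G] [TopologicalSpace G]
    [IsTopologicalAddGroup G] [CompactSpace G] [MeasurableSpace G] [BorelSpace G] (ν : Measure G)
    [IsProbabilityMeasure ν] (hν : ∀ t, ν.map (fun x => t + x) = ν) : ν.IsAddHaarMeasure :=
  have : ν.IsAddLeftInvariant := ⟨hν⟩
  Measure.isAddHaarMeasure_of_isCompact_nonempty_interior ν univ isCompact_univ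
    (by simp) (by simp) (by simp)

instance {G : Type*} [AddGroup G] [TopologicalSpace G] [IsTopologicalAddGroup G] [CompactSpace G]
    [MeasurableSpace G] [BorelSpace G] :
    IsProbabilityMeasure (Measure.addHaarMeasure (⊤ : TopologicalSpace.PositiveCompacts G)) :=
  ⟨Measure.addHaarMeasure_self⟩

variable (μ : Measure ℤ_[p]) [IsProbabilityMeasure μ] [μ.IsAddHaarMeasure]

/-- The coordinates `(b, c, d, e)` on `V_a(ℤ_p)`, regrouped into the iterated product carrying
`discDivSet`. -/
def coeffHom (p : ℕ) [Fact p.Prime] :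
    (Fin 4 → ℤ_[p]) →+ ((ℤ_[p] × ℤ_[p]) × ℤ_[p]) × ℤ_[p] where
  toFun v := (((v 0, v 1), v 2), v 3)
  map_zero' := rfl
  map_add' _ _ := rfl

lemma continuous_coeffHom : Continuous (coeffHom p) := by
  change Continuous fun v : Fin 4 → ℤ_[p] => (((v 0, v 1), v 2), v 3)
  fun_prop

lemma coeffHom_surjective : Function.Surjective (coeffHom p) :=
  fun y => ⟨![y.1.1.1, y.1.1.2, y.1.2, y.2], rfl⟩

lemma map_coeffHom_eq_prod (ν : Measure (Fin 4 → ℤ_[p])) [IsProbabilityMeasure ν]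
    [ν.IsAddHaarMeasure] : ν.map (coeffHom p) = ((μ.prod μ).prod μ).prod μ :=
  have : (μ.prod μ).IsAddHaarMeasure := inferInstance
  have : ((μ.prod μ).prod μ).IsAddHaarMeasure := Measure.prod.instIsAddHaarMeasure _ _
  have : (((μ.prod μ).prod μ).prod μ).IsAddHaarMeasure := Measure.prod.instIsAddHaarMeasure _ _
  have : IsProbabilityMeasure (ν.map (coeffHom p)) :=
    Measure.isProbabilityMeasure_map continuous_coeffHom.aemeasurable
  have : (ν.map (coeffHom p)).IsAddHaarMeasure :=
    Measure.isAddHaarMeasure_map_of_isFiniteMeasure ν _ continuous_coeffHom coeffHom_surjective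
  Measure.isAddHaarMeasure_eq_of_isProbabilityMeasure _ _

lemma measure_discDivSetA_eq (p : Nat.Primes) (μ : Measure ℤ_[(p : ℕ)]) [IsProbabilityMeasure μ]
    [μ.IsAddHaarMeasure] (ν : Measure (Fin 4 → ℤ_[(p : ℕ)])) [IsProbabilityMeasure ν]
    [ν.IsAddHaarMeasure] (a : ℤ_[(p : ℕ)]) (n : ℕ) :
    ν (discDivSetA p a n) = (((μ.prod μ).prod μ).prod μ) (discDivSet a n) := by
  rw [← map_coeffHom_eq_prod μ ν, Measure.map_apply continuous_coeffHom.measurable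
    (isClosed_discDivSet a n).measurableSet]
  rfl

end CoefficientCoordinates

section UnitMulPow

variable (μ : Measure ℤ_[p]) [IsProbabilityMeasure μ] [μ.IsAddHaarMeasure]

lemma norm_unit_mul_pow {u : ℤ_[p]} (hu : IsUnit u) (l : ℕ) :
    ‖u * (p : ℤ_[p]) ^ l‖ = ((p : ℝ) ^ l)⁻¹ := by
  rw [norm_mul, PadicInt.isUnit_iff.1 hu, one_mul, norm_pow, PadicInt.norm_p, inv_pow]

lemma unit_mul_pow_ne_zero {u : ℤ_[p]} (hu : IsUnit u) (l : ℕ) : u * (p : ℤ_[p]) ^ l ≠ 0 :=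
  mul_ne_zero hu.ne_zero (pow_ne_zero l PadicInt.prime_p.ne_zero)

lemma measure_discDivSet_unit_mul_pow_le_rpow {u : ℤ_[p]} (hu : IsUnit u) {k : ℕ} (hk : 0 < k)
    (hk2 : k ≤ 2) (l : ℕ) :
    (((μ.prod μ).prod μ).prod μ) (discDivSet (u * (p : ℤ_[p]) ^ l) (2 * k)) ≤
      ENNReal.ofReal (590478336 * (p : ℝ) ^ (-((2 * k : ℕ) - (l : ℝ)))) := by
  have hp : (0 : ℝ) < p := mod_cast (Fact.out : p.Prime).pos
  refine (measure_discDivSet_le_zpow μ (unit_mul_pow_ne_zero hu l) hk hk2).trans_eq ?_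
  rw [norm_unit_mul_pow hu, inv_inv, neg_sub, Real.rpow_sub hp, Real.rpow_natCast,
    Real.rpow_natCast, zpow_neg, zpow_natCast, div_eq_mul_inv]

lemma measure_discDivSet_unit_mul_pow_le_min {u : ℤ_[p]} (hu : IsUnit u) {k l : ℕ} (hk : 0 < k)
    (hl : l ≤ 2 * k) :
    (((μ.prod μ).prod μ).prod μ) (discDivSet (u * (p : ℤ_[p]) ^ l) (2 * k)) ≤
      ENNReal.ofReal (376233984 * min ((k : ℝ) * (p : ℝ) ^ ((l : ℝ) - 3 * (k : ℝ) / 2)) 1) := by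
  have hp : (1 : ℝ) ≤ p := mod_cast (Fact.out : p.Prime).one_le
  rcases le_total ((k : ℝ) * (p : ℝ) ^ ((l : ℝ) - 3 * (k : ℝ) / 2)) 1 with h | h
  · refine (measure_discDivSet_le_rpow μ (unit_mul_pow_ne_zero hu l) hk ?_).trans_eq ?_
    · rw [norm_unit_mul_pow hu, zpow_neg, zpow_natCast]
      gcongr
    · rw [min_eq_left h, norm_unit_mul_pow hu, inv_inv, ← Real.rpow_natCast,
        ← Real.rpow_add (one_pos.trans_le hp), ← sub_eq_add_neg]
  · rw [min_eq_right h]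
    exact measure_le_ofReal_of_one_le _ _ (by norm_num)

end UnitMulPow

end

/-- Bounds, uniform in the prime `p`, on the density
`ν_{up^ℓ}(χ_{p^{2k}})` of forms in `V_{up^ℓ}(ℤ_p)` whose discriminant is divisible by
`p^{2k}`; here `ν` is the Haar probability measure on `V_a(ℤ_p) ≅ ℤ_p⁴` (here: any
translation-invariant Borel probability measure), `u` is a unit and `0 ≤ ℓ ≤ 2k`. -/
theorem disc_divisibility_density_sliced :
    ∃ C : ℝ, 0 < C ∧
      ∀ (p : Nat.Primes) (ν : Measure (Fin 4 → ℤ_[(p : ℕ)])),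
        IsProbabilityMeasure ν →
        (∀ t : Fin 4 → ℤ_[(p : ℕ)], ν.map (fun x => t + x) = ν) →
        ∀ (k : ℕ), 1 ≤ k → ∀ (u : ℤ_[(p : ℕ)]), IsUnit u → ∀ (l : ℕ), l ≤ 2 * k →
        (ν (discDivSetA p u 2) ≤ ENNReal.ofReal (C * ((p : ℕ) : ℝ) ^ (-2 : ℝ))) ∧
        (ν (discDivSetA p (u * (p : ℕ)) 2)
          ≤ ENNReal.ofReal (C * ((p : ℕ) : ℝ) ^ (-2 : ℝ))) ∧
        (ν (discDivSetA p (u * ((p : ℕ)) ^ 2) 2)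
          ≤ ENNReal.ofReal (C * ((p : ℕ) : ℝ) ^ (-1 : ℝ))) ∧
        (ν (discDivSetA p (u * ((p : ℕ)) ^ l) 4)
          ≤ ENNReal.ofReal (C * ((p : ℕ) : ℝ) ^ (-(4 - (l : ℝ))))) ∧
        (3 ≤ k → ν (discDivSetA p (u * ((p : ℕ)) ^ l) (2 * k))
          ≤ ENNReal.ofReal
              (C * min ((k : ℝ) * ((p : ℕ) : ℝ) ^ ((l : ℝ) - 3 * (k : ℝ) / 2)) 1)) := by
  refine ⟨590478336, by norm_num, fun p ν _ hν k hk u hu l hl => ?_⟩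
  have := isAddHaarMeasure_of_map_add_left_eq ν hν
  let μ : Measure ℤ_[(p : ℕ)] := Measure.addHaarMeasure ⊤
  have hp : (0 : ℝ) < (p : ℕ) := mod_cast p.2.pos
  simp only [measure_discDivSetA_eq p μ ν]
  refine ⟨?_, ?_, ?_, ?_, fun _ => ?_⟩
  · simpa using measure_discDivSet_unit_mul_pow_le_rpow μ hu one_pos one_le_two 0
  · refine (measure_discDivSet_two_le_inv_sq μ hu).trans (ENNReal.ofReal_le_ofReal ?_)
    rw [Real.rpow_neg hp.le, Real.rpow_two, inv_pow]
    gcongr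
    norm_num
  · refine (measure_discDivSet_two_le_inv μ ((dvd_pow_self _ two_ne_zero).mul_left u)).trans
      (ENNReal.ofReal_le_ofReal ?_)
    rw [Real.rpow_neg_one]
    gcongr
    norm_num
  · simpa using measure_discDivSet_unit_mul_pow_le_rpow μ hu two_pos le_rfl l
  · refine (measure_discDivSet_unit_mul_pow_le_min μ hu hk hl).trans (ENNReal.ofReal_le_ofReal ?_)
    gcongr
    norm_num

end BQPaper
end
end

section
/- There is an absolute constant C with the following property. Let p be a prime, k ≥ 1 an integer, and f ∈ V(ℤ/p^kℤ) with f ∉ pV(ℤ/p^kℤ). Then for every h ∈ V(ℤ/p^kℤ): |G_{p^k}(f,h)| ≤ C; |G_{p^k}(f,h)| ≤ C p^{−1/2} if h ∈ p^{k−1}V(ℤ/p^kℤ) and h ≠ 0; and |G_{p^k}(f,h)| ≤ C p^{−1} if h ∉ p^{k−1}V(ℤ/p^kℤ). -/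
noncomputable section

namespace BQPaper

open scoped Real

/-- The additive character `m ↦ exp(2πi·m/n)` on `ℤ/nℤ` (evaluated at the canonical
lift of `m`; the value does not depend on the choice of lift). -/
def eChar (n : ℕ) (m : ZMod n) : ℂ :=
  Complex.exp (2 * (π : ℂ) * Complex.I * (m.val : ℂ) / (n : ℂ))

/-- The pairing `[f,h] = Σᵢ fᵢhᵢ` on binary quartic forms over `ℤ/nℤ`. -/
def pairing {R : Type*} [CommRing R] (f h : BQ R) : R :=
  f.a * h.a + f.b * h.b + f.c * h.c + f.d * h.d + f.e * h.e

/-- View a vector of coefficients as a binary quartic form. -/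
def ofVec {R : Type*} (v : Fin 5 → R) : BQ R := ⟨v 0, v 1, v 2, v 3, v 4⟩

/-- View a vector of entries as a 2×2 matrix. -/
def matOfVec {R : Type*} (v : Fin 4 → R) : Mat2 R := ⟨v 0, v 1, v 2, v 3⟩

/-- The number of elements of `GL₂(ℤ/nℤ)`. -/
def numGL (n : ℕ) : ℕ := Nat.card {m : Mat2 (ZMod n) // IsUnit m.det}

open scoped Classical in
/-- The orbital exponential sum
`G_{p^k}(f,h) = (1/(#(ℤ/p^kℤ)^× · #PGL₂(ℤ/p^kℤ))) Σ_{t units} Σ_{g ∈ PGL₂} e(t²[g·f,h]/p^k)`.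
Since the twisted action of `GL₂` factors through `PGL₂` and the fibres of
`GL₂ → PGL₂` have `#(ℤ/p^kℤ)^×` elements, this equals the normalised sum below over
`GL₂(ℤ/p^kℤ)`. -/
noncomputable def orbSum (n : ℕ) (f h : BQ (ZMod n)) : ℂ :=
  ((Nat.card (ZMod n)ˣ : ℂ) * (numGL n : ℂ))⁻¹ *
    ∑' t : (ZMod n)ˣ, ∑' v : Fin 4 → ZMod n,
      if IsUnit (matOfVec v).det then
        eChar n (((t : ZMod n) ^ 2) * pairing (f.twist (matOfVec v)) h)
      else 0

/-!
Fix `g` and average over `t` first. If `[g·f, h] = p ^ j * m` with `m` a unit and `j < k`, then the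
mean of `exp(2πi·t²p^j m/p^k)` over units `t` is a quadratic Gauss sum of size `O(p^{-1/2})` for
`j = k - 1`, and zero for `j ≤ k - 2`, because substituting `t(1 + p^{k-j-1}s)` for `t` multiplies
the summand by a nontrivial additive character of `s`.

Writing `h = p ^ j * h₀` with `h₀` nonzero mod `p`, it remains to discard the `g` for which
`[g·f, h₀]` vanishes mod `p`. Up to the determinant this is a quartic polynomial in the entries of
`g`, so by Schwartz–Zippel the discarded `g` have density `O(1/p)`, unless the polynomial is zero
mod `p`. It is not: at the rank-one matrix with rows `u(x, y)` and `v(x, y)` it equals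
`f(x, y) * ĥ₀(u, v)`, where `ĥ₀` is `h₀` with its coefficients multiplied by `1, 4, 6, 4, 1`.
-/

open Finset
open scoped BigOperators

section Density

lemma dens_filter_apply_mem {G H : Type*} [AddGroup G] [AddGroup H] [Fintype G] [Fintype H]
    [DecidableEq H] (Φ : G →+ H) (hΦ : Function.Surjective Φ) (t : Finset H) :
    ({x | Φ x ∈ t} : Finset G).dens = t.dens := by
  have card_preimage (s : Finset H) : #{x | Φ x ∈ s} = #s * #{x | Φ x = 0} := by
    rw [card_eq_sum_card_fiberwise (f := Φ) (t := s) (by intro x; simp)]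
    refine sum_const_nat fun y hy ↦ ?_
    rw [← AddMonoidHom.card_fiber_eq_of_mem_range Φ (hΦ y) (hΦ 0), filter_filter]
    congr 1 with x
    simp only [mem_filter, mem_univ, true_and]
    exact ⟨And.right, fun h ↦ ⟨h ▸ hy, h⟩⟩
  have card_domain : Fintype.card G = Fintype.card H * #{x | Φ x = 0} := by
    simpa using card_preimage univ
  have hker : (#{x | Φ x = 0} : ℚ≥0) ≠ 0 :=
    Nat.cast_ne_zero.mpr (card_ne_zero_of_mem (a := 0) (by simp))
  rw [dens_eq_card_div_card, dens_eq_card_div_card, card_preimage, card_domain, Nat.cast_mul,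
    Nat.cast_mul, mul_div_mul_right _ _ hker]

open MvPolynomial in
lemma dens_map_eval_eq_zero_le {R K : Type*} [CommRing R] [Fintype R] [Field K] [Fintype K]
    [DecidableEq K] (φ : R →+* K) (hφ : Function.Surjective φ) {n : ℕ}
    {F : MvPolynomial (Fin n) R} (hF : F.map φ ≠ 0) {d : ℕ} (hd : F.totalDegree ≤ d) :
    ({v | φ (eval v F) = 0} : Finset (Fin n → R)).dens ≤ d / Fintype.card K := by
  have reduce : ({v | φ (eval v F) = 0} : Finset (Fin n → R)).dens =
      ({w | eval w (F.map φ) = 0} : Finset (Fin n → K)).dens := by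
    rw [← dens_filter_apply_mem (φ.toAddMonoidHom.compLeft (Fin n)) hφ.comp_left]
    simp only [eval₂_comp, eval_map, mem_filter, mem_univ, true_and]
    rfl
  calc _ = _ := reduce
    _ ≤ (F.map φ).totalDegree / Fintype.card K := by
      simpa [dens_eq_card_div_card] using schwartz_zippel_totalDegree hF univ
    _ ≤ d / Fintype.card K := by
      gcongr
      exact (sup_mono (support_map_subset φ F)).trans hd

end Density

section CharacterSums

lemma sum_units_add_sum_filter_not_isUnit {M A : Type*} [Monoid M] [Fintype M] [Fintype Mˣ]
    [DecidablePred (IsUnit : M → Prop)] [AddCommMonoid A] (F : M → A) :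
    ∑ t : Mˣ, F t + ∑ x with ¬IsUnit x, F x = ∑ x, F x := by
  classical
  rw [← sum_filter_add_sum_filter_not univ (fun x ↦ IsUnit x) F]
  congr 1
  refine sum_bij (fun t _ ↦ (t : M)) (by simp) (fun _ _ _ _ ↦ Units.ext) (fun x hx ↦ ?_) (by simp)
  obtain ⟨t, rfl⟩ := (mem_filter.mp hx).2
  exact ⟨t, mem_univ t, rfl⟩

lemma norm_sum_units_le {M E : Type*} [Monoid M] [Fintype M] [Fintype Mˣ]
    [DecidablePred (IsUnit : M → Prop)] [SeminormedAddCommGroup E] {F : M → E}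
    (hF : ∀ x, ‖F x‖ ≤ 1) :
    ‖∑ t : Mˣ, F t‖ ≤ ‖∑ x, F x‖ + #{x : M | ¬IsUnit x} := by
  rw [eq_sub_of_add_eq (sum_units_add_sum_filter_not_isUnit F)]
  refine (norm_sub_le _ _).trans ?_
  gcongr
  simpa using norm_sum_le_of_le {x : M | ¬IsUnit x} fun x _ ↦ hF x

lemma sum_units_addChar_sq_mul_eq_zero {R A : Type*} [CommRing R] [Finite R] [Fintype Rˣ]
    [CommRing A] [IsDomain A] [CharZero A] {ψ : AddChar R A} (hψ : ψ.IsPrimitive) {c ε : R}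
    (hε : IsNilpotent ε) (hc : ε ^ 2 * c = 0) (hc' : 2 * ε * c ≠ 0) :
    ∑ t : Rˣ, ψ ((t : R) ^ 2 * c) = 0 := by
  classical
  have := Fintype.ofFinite R
  have translate (s : R) : ∑ t : Rˣ, ψ ((t : R) ^ 2 * c) =
      ∑ t : Rˣ, ψ ((t : R) ^ 2 * c) * ψ (s * ((t : R) ^ 2 * (2 * ε * c))) := by
    have hu : IsUnit (1 + ε * s) := ((Commute.all _ _).isNilpotent_mul_right hε).isUnit_one_add
    rw [← Equiv.sum_comp (Equiv.mulRight hu.unit)]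
    refine sum_congr rfl fun t _ ↦ ?_
    rw [← AddChar.map_add_eq_mul, Equiv.coe_mulRight, Units.val_mul, IsUnit.unit_spec]
    congr 1
    linear_combination ((t : R) ^ 2 * s ^ 2) * hc
  have average : (Fintype.card R : A) * ∑ t : Rˣ, ψ ((t : R) ^ 2 * c) = 0 := by
    rw [← nsmul_eq_mul, ← card_univ, ← sum_const, sum_congr rfl fun s _ ↦ translate s, sum_comm]
    refine sum_eq_zero fun t _ ↦ ?_
    have ht : (t : R) ^ 2 * (2 * ε * c) ≠ 0 := by
      rwa [Ne, (t.isUnit.pow 2).mul_right_eq_zero]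
    rw [← mul_sum, AddChar.sum_mulShift _ hψ, if_neg ht, Nat.cast_zero, mul_zero]
  exact (mul_eq_zero.mp average).resolve_left (Nat.cast_ne_zero.mpr Fintype.card_ne_zero)

variable {R : Type*} [CommRing R] [Fintype R]

lemma sum_addChar_sq_mul_mul_conj (ψ : AddChar R ℂ) (c : R) :
    (∑ x, ψ (x ^ 2 * c)) * (starRingEnd ℂ) (∑ x, ψ (x ^ 2 * c)) =
      ∑ d, ψ (d ^ 2 * c) * ∑ s, ψ (s * (2 * d * c)) := by
  simp_rw [map_sum, sum_mul_sum, mul_sum]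
  rw [sum_comm, sum_comm (s := univ (α := R)) (f := fun d s ↦ ψ (d ^ 2 * c) * _)]
  refine sum_congr rfl fun s _ ↦ ?_
  rw [← Equiv.sum_comp (Equiv.addRight s)]
  refine sum_congr rfl fun d _ ↦ ?_
  rw [← AddChar.map_neg_eq_conj, ← AddChar.map_add_eq_mul, ← AddChar.map_add_eq_mul,
    Equiv.coe_addRight]
  congr 1
  ring

lemma norm_sq_sum_addChar_sq_mul_le [DecidableEq R] {ψ : AddChar R ℂ} (hψ : ψ.IsPrimitive)
    (c : R) :
    ‖∑ x, ψ (x ^ 2 * c)‖ ^ 2 ≤ Fintype.card R * #{d : R | 2 * d * c = 0} := by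
  calc ‖∑ x, ψ (x ^ 2 * c)‖ ^ 2
      = ‖∑ d, ψ (d ^ 2 * c) * ∑ s, ψ (s * (2 * d * c))‖ := by
        rw [← sum_addChar_sq_mul_mul_conj, norm_mul, RCLike.norm_conj, sq]
    _ ≤ ∑ d, ‖ψ (d ^ 2 * c) * ∑ s, ψ (s * (2 * d * c))‖ := norm_sum_le _ _
    _ = ∑ d, if 2 * d * c = 0 then (Fintype.card R : ℝ) else 0 := by
        refine sum_congr rfl fun d _ ↦ ?_
        rw [norm_mul, AddChar.norm_apply, one_mul, AddChar.sum_mulShift _ hψ]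
        split_ifs <;> simp
    _ = Fintype.card R * #{d : R | 2 * d * c = 0} := by
        rw [← sum_filter, sum_const, nsmul_eq_mul, mul_comm]

end CharacterSums

section Reduction

variable {p k : ℕ} [Fact p.Prime]

lemma card_units_zmod_prime_pow (hk : k ≠ 0) :
    (Fintype.card (ZMod (p ^ k))ˣ : ℝ) = p ^ k * (1 - (p : ℝ)⁻¹) := by
  have htotient := Nat.totient_eq_mul_prod_factors (p ^ k)
  rw [Nat.primeFactors_prime_pow hk Fact.out, prod_singleton] at htotient
  rw [ZMod.card_units_eq_totient]
  simpa using congrArg ((↑) : ℚ → ℝ) htotient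

variable (φ : ZMod (p ^ k) →+* ZMod p)

include φ in
lemma exponent_pos_of_ringHom : 0 < k := by
  rw [Nat.pos_iff_ne_zero]
  rintro rfl
  have : Subsingleton (ZMod (p ^ 0)) := inferInstanceAs (Subsingleton (ZMod 1))
  exact one_ne_zero (α := ZMod p) (by rw [← map_one φ, Subsingleton.elim 1 0, map_zero])

lemma map_eq_zero_iff_dvd (x : ZMod (p ^ k)) : φ x = 0 ↔ (p : ZMod (p ^ k)) ∣ x := by
  obtain ⟨n, rfl⟩ := ZMod.natCast_zmod_surjective x
  constructor
  · rw [map_natCast, ZMod.natCast_eq_zero_iff]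
    exact Nat.cast_dvd_cast
  · intro h
    simpa using map_dvd φ h

lemma isUnit_iff_map_ne_zero (x : ZMod (p ^ k)) : IsUnit x ↔ φ x ≠ 0 := by
  obtain ⟨n, rfl⟩ := ZMod.natCast_zmod_surjective x
  rw [ZMod.isUnit_iff_coprime, Nat.coprime_pow_right_iff (exponent_pos_of_ringHom φ),
    Nat.coprime_comm, (Fact.out : p.Prime).coprime_iff_not_dvd, map_natCast, Ne,
    ZMod.natCast_eq_zero_iff]

lemma pow_pred_mul_eq_zero_iff (x : ZMod (p ^ k)) :
    (p : ZMod (p ^ k)) ^ (k - 1) * x = 0 ↔ φ x = 0 := by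
  obtain ⟨n, rfl⟩ := ZMod.natCast_zmod_surjective x
  have hp : 0 < p ^ (k - 1) := pow_pos (Fact.out : p.Prime).pos _
  rw [map_natCast, ← Nat.cast_pow, ← Nat.cast_mul, ZMod.natCast_eq_zero_iff,
    ZMod.natCast_eq_zero_iff, ← Nat.mul_dvd_mul_iff_left (b := p) hp,
    pow_sub_one_mul (exponent_pos_of_ringHom φ).ne']

lemma card_filter_map_eq_zero :
    (#{x : ZMod (p ^ k) | φ x = 0} : ℝ) = p ^ k * (p : ℝ)⁻¹ := by
  have hdens : ({x | φ x = 0} : Finset (ZMod (p ^ k))).dens = (p : ℚ≥0)⁻¹ := by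
    simpa using dens_filter_apply_mem φ.toAddMonoidHom (ZMod.ringHom_surjective φ) {0}
  rw [← natCast_card_mul_nnratCast_dens, hdens, ZMod.card]
  push_cast
  rfl

end Reduction

section Forms

variable {R S : Type*} [CommRing R] [CommRing S]

lemma map_pairing (φ : R →+* S) (f h : BQ R) : φ (pairing f h) = pairing (f.map φ) (h.map φ) := by
  simp only [pairing, BQ.map, map_add, map_mul]

lemma Mat2.map_det (φ : R →+* S) (m : Mat2 R) : φ m.det = (m.map φ).det := by
  simp only [Mat2.det, Mat2.map, map_sub, map_mul]

lemma BQ.map_subst (φ : R →+* S) (f : BQ R) (m : Mat2 R) :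
    (f.subst m).map φ = (f.map φ).subst (m.map φ) := by
  simp only [BQ.subst, BQ.map, Mat2.map, map_add, map_mul, map_pow, map_ofNat]

lemma pairing_twist_rsmul (f h : BQ R) (m : Mat2 R) (c : R) :
    pairing (f.twist m) (h.rsmul c) = c * (Ring.inverse m.det ^ 2 * pairing (f.subst m) h) := by
  simp only [BQ.twist, BQ.rsmul, pairing]
  ring

/-- The form with coefficients `(h₀, 4h₁, 6h₂, 4h₃, h₄)`. Its value at `(u, v)` is the pairing of
`h` with the fourth power `(ux + vy)⁴`. -/
def BQ.binomialScale (h : BQ R) : BQ R := ⟨h.a, 4 * h.b, 6 * h.c, 4 * h.d, h.e⟩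

lemma pairing_subst_rank_one (f h : BQ R) (x y u v : R) :
    pairing (f.subst ⟨u * x, u * y, v * x, v * y⟩) h = f.eval x y * h.binomialScale.eval u v := by
  simp only [pairing, BQ.subst, BQ.eval, BQ.binomialScale]
  ring

lemma BQ.binomialScale_ne_zero [IsDomain R] (h6 : (6 : R) ≠ 0) {h : BQ R}
    (hh : h ≠ ⟨0, 0, 0, 0, 0⟩) : h.binomialScale ≠ ⟨0, 0, 0, 0, 0⟩ := by
  have h4 : (4 : R) ≠ 0 := by
    intro h4
    have h2 : (2 : R) = 0 := pow_eq_zero_iff two_ne_zero |>.mp (by linear_combination h4)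
    exact h6 (by linear_combination 3 * h2)
  contrapose! hh
  cases h
  simpa [BQ.binomialScale, h4, h6] using hh

open Polynomial in
lemma BQ.exists_eval_one_ne_zero [IsDomain R] (hR : 4 < Cardinal.mk R) {f : BQ R}
    (hf : f ≠ ⟨0, 0, 0, 0, 0⟩) : ∃ y, f.eval 1 y ≠ 0 := by
  let P : R[X] := C f.a + C f.b * X + C f.c * X ^ 2 + C f.d * X ^ 3 + C f.e * X ^ 4
  have hdeg : P.natDegree ≤ 4 := by
    simp only [P]
    compute_degree
  have hP : P ≠ 0 := by
    contrapose! hf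
    have hcoeff (i : ℕ) : P.coeff i = 0 := by rw [hf, coeff_zero]
    have ha : f.a = 0 := by simpa [P] using hcoeff 0
    have hb : f.b = 0 := by simpa [P, coeff_X, coeff_C] using hcoeff 1
    have hc : f.c = 0 := by simpa [P, coeff_X, coeff_C] using hcoeff 2
    have hd : f.d = 0 := by simpa [P, coeff_X, coeff_C] using hcoeff 3
    have he : f.e = 0 := by simpa [P, coeff_X, coeff_C] using hcoeff 4
    change BQ.mk f.a f.b f.c f.d f.e = _
    rw [ha, hb, hc, hd, he]
  obtain ⟨y, hy⟩ := exists_eval_ne_zero_of_natDegree_lt_card P hP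
    ((Nat.cast_le.mpr hdeg).trans_lt hR)
  exact ⟨y, by simpa [P, BQ.eval] using hy⟩

end Forms

section GenericMatrix

open MvPolynomial

variable {R S : Type*} [CommRing R] [CommRing S]

/-- The determinant of the generic matrix, as a polynomial in its four entries. -/
def detPoly (R : Type*) [CommRing R] : MvPolynomial (Fin 4) R := (matOfVec X).det

/-- The pairing `[g·f, h]` without the determinant twist, as a polynomial in the four entries
of `g`. -/
def pairingPoly (f h : BQ R) : MvPolynomial (Fin 4) R :=
  pairing ((f.map C).subst (matOfVec X)) (h.map C)

lemma eval_detPoly (v : Fin 4 → R) : eval v (detPoly R) = (matOfVec v).det := by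
  simp [detPoly, Mat2.map_det, Mat2.map, matOfVec]

lemma eval_pairingPoly (f h : BQ R) (v : Fin 4 → R) :
    eval v (pairingPoly f h) = pairing (f.subst (matOfVec v)) h := by
  rw [pairingPoly, map_pairing, BQ.map_subst]
  simp [BQ.map, Mat2.map, matOfVec]

lemma map_detPoly (φ : R →+* S) : (detPoly R).map φ = detPoly S := by
  simp [detPoly, Mat2.map_det, Mat2.map, matOfVec]

lemma map_pairingPoly (φ : R →+* S) (f h : BQ R) :
    (pairingPoly f h).map φ = pairingPoly (f.map φ) (h.map φ) := by
  rw [pairingPoly, pairingPoly, map_pairing, BQ.map_subst]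
  simp [BQ.map, Mat2.map, matOfVec]

lemma detPoly_ne_zero [Nontrivial R] : detPoly R ≠ 0 := by
  intro h
  have := eval_detPoly (![1, 0, 0, 1] : Fin 4 → R)
  simp [h, matOfVec, Mat2.det] at this

lemma pairingPoly_ne_zero [IsDomain R] (hR : 4 < Cardinal.mk R) (h6 : (6 : R) ≠ 0) {f h : BQ R}
    (hf : f ≠ ⟨0, 0, 0, 0, 0⟩) (hh : h ≠ ⟨0, 0, 0, 0, 0⟩) : pairingPoly f h ≠ 0 := by
  obtain ⟨y, hy⟩ := BQ.exists_eval_one_ne_zero hR hf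
  obtain ⟨v, hv⟩ := BQ.exists_eval_one_ne_zero hR (BQ.binomialScale_ne_zero h6 hh)
  intro h0
  have hrank := pairing_subst_rank_one f h 1 y 1 v
  have heval := eval_pairingPoly f h ![1 * 1, 1 * y, v * 1, v * y]
  rw [h0, map_zero] at heval
  exact mul_ne_zero hy hv (hrank.symm.trans heval.symm)

lemma totalDegree_detPoly_le [Nontrivial R] : (detPoly R).totalDegree ≤ 2 := by
  simp only [detPoly, Mat2.det, matOfVec]
  grind [totalDegree_sub, totalDegree_mul, totalDegree_X]

lemma totalDegree_pairingPoly_le [Nontrivial R] (f h : BQ R) :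
    (pairingPoly f h).totalDegree ≤ 4 := by
  have ofNat (n : ℕ) [n.AtLeastTwo] :
      (OfNat.ofNat n : MvPolynomial (Fin 4) R).totalDegree = 0 := by
    rw [← map_ofNat C, totalDegree_C]
  simp only [pairingPoly, pairing, BQ.subst, BQ.map, matOfVec, add_mul]
  with_reducible repeat' refine (totalDegree_add _ _).trans (max_le ?_ ?_)
  all_goals
    repeat grw [totalDegree_mul]
    simp only [ofNat, totalDegree_C, totalDegree_X, totalDegree_X_pow, Nat.reduceAdd,
      Nat.reduceLeDiff]

end GenericMatrix

section Divisibility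

lemma BQ.exists_eq_rsmul_pow {R : Type*} [CommRing R] {ϖ : R} {e : ℕ} {h : BQ R}
    (hh : ¬∃ g : BQ R, h = g.rsmul (ϖ ^ e)) :
    ∃ j < e, ∃ h₀ : BQ R, h = h₀.rsmul (ϖ ^ j) ∧ ¬∃ g : BQ R, h₀ = g.rsmul ϖ := by
  induction e with
  | zero => exact absurd ⟨h, by simp [BQ.rsmul]⟩ hh
  | succ e ih =>
    by_cases hdiv : ∃ g : BQ R, h = g.rsmul (ϖ ^ e)
    · obtain ⟨h₀, rfl⟩ := hdiv
      refine ⟨e, e.lt_succ_self, h₀, rfl, ?_⟩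
      rintro ⟨g, rfl⟩
      exact hh ⟨g, by simp only [BQ.rsmul, pow_succ, mul_assoc]⟩
    · obtain ⟨j, hj, hprim⟩ := ih hdiv
      exact ⟨j, hj.trans e.lt_succ_self, hprim⟩

variable {p k : ℕ} [Fact p.Prime] (φ : ZMod (p ^ k) →+* ZMod p)

lemma BQ.map_ne_zero_of_not_exists_eq_rsmul {f : BQ (ZMod (p ^ k))}
    (hf : ¬∃ g : BQ (ZMod (p ^ k)), f = g.rsmul (p : ZMod (p ^ k))) :
    f.map φ ≠ ⟨0, 0, 0, 0, 0⟩ := by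
  contrapose! hf
  simp only [BQ.map, BQ.mk.injEq, map_eq_zero_iff_dvd] at hf
  obtain ⟨⟨a, ha⟩, ⟨b, hb⟩, ⟨c, hc⟩, ⟨d, hd⟩, ⟨e, he⟩⟩ := hf
  exact ⟨⟨a, b, c, d, e⟩, by rw [BQ.rsmul, ← ha, ← hb, ← hc, ← hd, ← he]⟩

lemma BQ.map_ne_zero_of_rsmul_pow_pred_ne_zero {h : BQ (ZMod (p ^ k))}
    (hh : h.rsmul ((p : ZMod (p ^ k)) ^ (k - 1)) ≠ ⟨0, 0, 0, 0, 0⟩) :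
    h.map φ ≠ ⟨0, 0, 0, 0, 0⟩ := by
  simpa only [BQ.map, BQ.rsmul, Ne, BQ.mk.injEq, pow_pred_mul_eq_zero_iff φ] using hh

end Divisibility

section UnitSquareMean

/-- The mean of `exp(2πi·t²m/n)` over the units `t` of `ℤ/nℤ`, which is the contribution of a matrix
`g` with `[g·f, h] = m` to the orbital sum. -/
def unitSquareMean (n : ℕ) [NeZero n] (m : ZMod n) : ℂ :=
  𝔼 t : (ZMod n)ˣ, ZMod.stdAddChar ((t : ZMod n) ^ 2 * m)

lemma norm_unitSquareMean_le_one (n : ℕ) [NeZero n] (m : ZMod n) : ‖unitSquareMean n m‖ ≤ 1 :=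
  (RCLike.norm_expect_le (K := ℂ)).trans <|
    expect_le univ_nonempty fun _ _ ↦ (AddChar.norm_apply _ _).le

variable {p k : ℕ} [Fact p.Prime] (φ : ZMod (p ^ k) →+* ZMod p)

lemma unitSquareMean_pow_mul_eq_zero (hp : p ≠ 2) {j : ℕ} (hj : j + 2 ≤ k) {m : ZMod (p ^ k)}
    (hm : φ m ≠ 0) : unitSquareMean (p ^ k) ((p : ZMod (p ^ k)) ^ j * m) = 0 := by
  obtain ⟨l, rfl⟩ := Nat.exists_eq_add_of_le hj
  have hpow : (p : ZMod (p ^ (j + 2 + l))) ^ (j + 2 + l) = 0 := by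
    rw [← Nat.cast_pow, ZMod.natCast_self]
  have h2 : (2 : ZMod p) ≠ 0 := mod_cast ZMod.prime_ne_zero p 2 hp
  have hε : IsNilpotent ((p : ZMod (p ^ (j + 2 + l))) ^ (l + 1)) :=
    IsNilpotent.pow_succ l ⟨_, hpow⟩
  rw [unitSquareMean, expect_eq_sum_div_card,
    sum_units_addChar_sq_mul_eq_zero (ZMod.isPrimitive_stdAddChar _) hε, zero_div]
  · linear_combination (p : ZMod (p ^ (j + 2 + l))) ^ l * m * hpow
  · have := (pow_pred_mul_eq_zero_iff φ (2 * m)).not.mpr (by simp [map_ofNat φ, h2, hm])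
    convert this using 1
    rw [show j + 2 + l - 1 = l + 1 + j by lia]
    ring

lemma norm_sum_stdAddChar_sq_mul_pow_pred_mul_le (hp : p ≠ 2) {m : ZMod (p ^ k)} (hm : φ m ≠ 0) :
    ‖∑ x : ZMod (p ^ k), ZMod.stdAddChar (x ^ 2 * ((p : ZMod (p ^ k)) ^ (k - 1) * m))‖ ≤
      p ^ k * (√p)⁻¹ := by
  have h2 : (2 : ZMod p) ≠ 0 := mod_cast ZMod.prime_ne_zero p 2 hp
  have annihilator (d : ZMod (p ^ k)) :
      2 * d * ((p : ZMod (p ^ k)) ^ (k - 1) * m) = 0 ↔ φ d = 0 := by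
    rw [mul_left_comm, pow_pred_mul_eq_zero_iff φ]
    simp [map_ofNat φ, h2, hm]
  rw [← sq_le_sq₀ (norm_nonneg _) (by positivity)]
  calc _ ≤ (Fintype.card (ZMod (p ^ k)) : ℝ) * #{d : ZMod (p ^ k) | φ d = 0} := by
        simpa only [annihilator] using
          norm_sq_sum_addChar_sq_mul_le (ZMod.isPrimitive_stdAddChar (p ^ k)) (p ^ (k - 1) * m)
    _ = (p ^ k * (√p)⁻¹) ^ 2 := by
        rw [card_filter_map_eq_zero φ, ZMod.card, mul_pow, inv_pow, Real.sq_sqrt p.cast_nonneg]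
        push_cast
        ring

lemma norm_unitSquareMean_pow_pred_mul_le (hp : p ≠ 2) {m : ZMod (p ^ k)} (hm : φ m ≠ 0) :
    ‖unitSquareMean (p ^ k) ((p : ZMod (p ^ k)) ^ (k - 1) * m)‖ ≤ 3 * (√p)⁻¹ := by
  classical
  have hp3 : (3 : ℝ) ≤ p := mod_cast (Fact.out : p.Prime).two_le.lt_of_ne' hp
  have hN : (0 : ℝ) < p ^ k := by positivity
  have hr : (√p)⁻¹ ^ 2 = (p : ℝ)⁻¹ := by rw [inv_pow, Real.sq_sqrt p.cast_nonneg]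
  have hr3 : (√p)⁻¹ ^ 2 ≤ (3 : ℝ)⁻¹ := by
    rw [hr]
    gcongr
  have hr0 : 0 ≤ (√p)⁻¹ := by positivity
  have nonunits : (#{x : ZMod (p ^ k) | ¬IsUnit x} : ℝ) = p ^ k * (√p)⁻¹ ^ 2 := by
    simp only [isUnit_iff_map_ne_zero φ, not_not, card_filter_map_eq_zero φ, hr]
  rw [unitSquareMean, expect_eq_sum_div_card, norm_div, card_univ, Complex.norm_natCast,
    card_units_zmod_prime_pow (exponent_pos_of_ringHom φ).ne', ← hr,
    div_le_iff₀ (mul_pos hN (by linarith))]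
  calc _ ≤ _ := norm_sum_units_le fun x ↦ (AddChar.norm_apply (ZMod.stdAddChar (N := p ^ k)) _).le
    _ ≤ p ^ k * (√p)⁻¹ + p ^ k * (√p)⁻¹ ^ 2 :=
        add_le_add (norm_sum_stdAddChar_sq_mul_pow_pred_mul_le φ hp hm) nonunits.le
    _ ≤ 3 * (√p)⁻¹ * (p ^ k * (1 - (√p)⁻¹ ^ 2)) := by
        have : 0 ≤ 2 - (√p)⁻¹ - 3 * (√p)⁻¹ ^ 2 := by nlinarith
        nlinarith [mul_nonneg (mul_nonneg hN.le hr0) this]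

end UnitSquareMean

section OrbitalSum

lemma eChar_eq_stdAddChar (n : ℕ) [NeZero n] (m : ZMod n) : eChar n m = ZMod.stdAddChar m := by
  rw [ZMod.stdAddChar_apply, ZMod.toCircle_apply, eChar]

open scoped Classical in
/-- The group `GL₂(ℤ/nℤ)`, in the coordinates over which `orbSum` is summed. -/
def invertibleMatrices (n : ℕ) [NeZero n] : Finset (Fin 4 → ZMod n) :=
  {v | IsUnit (matOfVec v).det}

lemma mem_invertibleMatrices {n : ℕ} [NeZero n] {v : Fin 4 → ZMod n} :
    v ∈ invertibleMatrices n ↔ IsUnit (matOfVec v).det := by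
  simp only [invertibleMatrices, mem_filter, mem_univ, true_and]

lemma invertibleMatrices_nonempty (n : ℕ) [NeZero n] : (invertibleMatrices n).Nonempty :=
  ⟨![1, 0, 0, 1], mem_invertibleMatrices.mpr (by simp [matOfVec, Mat2.det])⟩

lemma numGL_eq_card_invertibleMatrices (n : ℕ) [NeZero n] :
    numGL n = #(invertibleMatrices n) := by
  have e : {m : Mat2 (ZMod n) // IsUnit m.det} ≃ invertibleMatrices n :=
    { toFun m := ⟨![m.1.p, m.1.q, m.1.r, m.1.s], mem_invertibleMatrices.mpr m.2⟩
      invFun v := ⟨matOfVec v.1, mem_invertibleMatrices.mp v.2⟩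
      left_inv _ := rfl
      right_inv v := by ext i; fin_cases i <;> rfl }
  rw [numGL, Nat.card_congr e, Nat.card_eq_fintype_card, Fintype.card_coe]

lemma orbSum_eq_expect (n : ℕ) [NeZero n] (f h : BQ (ZMod n)) :
    orbSum n f h =
      𝔼 v ∈ invertibleMatrices n, unitSquareMean n (pairing (f.twist (matOfVec v)) h) := by
  classical
  simp only [orbSum, tsum_fintype, unitSquareMean, eChar_eq_stdAddChar, expect_eq_sum_div_card,
    invertibleMatrices, numGL_eq_card_invertibleMatrices]
  rw [sum_comm, ← sum_div, sum_filter, div_div, div_eq_inv_mul, card_univ,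
    Nat.card_eq_fintype_card]
  congr! 2 with v
  split_ifs <;> simp

lemma norm_orbSum_le_add_dens_div {n : ℕ} [NeZero n] {f h : BQ (ZMod n)}
    (bad : Finset (Fin 4 → ZMod n)) {B : ℝ} (hB : 0 ≤ B)
    (hgood : ∀ v ∈ invertibleMatrices n, v ∉ bad →
      ‖unitSquareMean n (pairing (f.twist (matOfVec v)) h)‖ ≤ B) :
    ‖orbSum n f h‖ ≤ B + bad.dens / (invertibleMatrices n).dens := by
  classical
  rw [orbSum_eq_expect]
  calc _ ≤ 𝔼 v ∈ invertibleMatrices n, ‖unitSquareMean n (pairing (f.twist (matOfVec v)) h)‖ :=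
        RCLike.norm_expect_le (K := ℂ)
    _ ≤ 𝔼 v ∈ invertibleMatrices n, (B + if v ∈ bad then 1 else 0) := by
        refine expect_le_expect fun v hv ↦ ?_
        split_ifs with hbad
        · exact (norm_unitSquareMean_le_one n _).trans (le_add_of_nonneg_left hB)
        · simpa using hgood v hv hbad
    _ = B + #{v ∈ invertibleMatrices n | v ∈ bad} / #(invertibleMatrices n) := by
        rw [expect_add_distrib, expect_const (invertibleMatrices_nonempty n),
          expect_eq_sum_div_card, sum_boole]
    _ ≤ B + #bad / #(invertibleMatrices n) := by
        gcongr
        exact fun v hv ↦ (mem_filter.mp hv).2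
    _ = B + bad.dens / (invertibleMatrices n).dens := by
        simp only [dens_eq_card_div_card, NNRat.cast_div, NNRat.cast_natCast]
        rw [div_div_div_cancel_right₀ (Nat.cast_ne_zero.mpr Fintype.card_ne_zero)]

lemma norm_orbSum_le_one (n : ℕ) [NeZero n] (f h : BQ (ZMod n)) : ‖orbSum n f h‖ ≤ 1 := by
  simpa using norm_orbSum_le_add_dens_div ∅ zero_le_one
    fun v _ _ ↦ norm_unitSquareMean_le_one n (pairing (f.twist (matOfVec v)) h)

end OrbitalSum

section PrimePowers

variable {p k : ℕ} [Fact p.Prime] (φ : ZMod (p ^ k) →+* ZMod p)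

include φ in
lemma one_sub_le_dens_invertibleMatrices :
    1 - 2 / (p : ℝ) ≤ (invertibleMatrices (p ^ k)).dens := by
  have compl : (invertibleMatrices (p ^ k))ᶜ =
      ({v | φ (MvPolynomial.eval v (detPoly _)) = 0} : Finset (Fin 4 → ZMod (p ^ k))) := by
    ext v
    simp only [mem_compl, mem_invertibleMatrices, mem_filter, mem_univ, true_and, eval_detPoly,
      isUnit_iff_map_ne_zero φ, not_not]
  have : Nontrivial (ZMod (p ^ k)) := φ.domain_nontrivial
  have hle : (invertibleMatrices (p ^ k))ᶜ.dens ≤ (2 : ℕ) / (p : ℚ≥0) := by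
    simpa only [compl, ZMod.card] using dens_map_eval_eq_zero_le φ (ZMod.ringHom_surjective φ)
      (map_detPoly φ ▸ detPoly_ne_zero) totalDegree_detPoly_le
  have hsum : (invertibleMatrices (p ^ k))ᶜ.dens + (invertibleMatrices (p ^ k)).dens = 1 := by
    rw [compl_eq_univ_sdiff, dens_sdiff_add_dens_eq_dens (subset_univ _), dens_univ]
  have hle' : ((invertibleMatrices (p ^ k))ᶜ.dens : ℝ) ≤ 2 / p := by
    simpa using (NNRat.cast_le (K := ℝ)).mpr hle
  have hsum' : ((invertibleMatrices (p ^ k))ᶜ.dens : ℝ) + (invertibleMatrices (p ^ k)).dens = 1 :=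
    mod_cast hsum
  linarith

lemma dens_map_eval_pairingPoly_eq_zero_le (hp : 5 ≤ p) {f h : BQ (ZMod (p ^ k))}
    (hf : f.map φ ≠ ⟨0, 0, 0, 0, 0⟩) (hh : h.map φ ≠ ⟨0, 0, 0, 0, 0⟩) :
    (({v | φ (MvPolynomial.eval v (pairingPoly f h)) = 0} : Finset (Fin 4 → ZMod (p ^ k))).dens : ℝ)
      ≤ 4 / p := by
  have : Nontrivial (ZMod (p ^ k)) := φ.domain_nontrivial
  have h2 : (2 : ZMod p) ≠ 0 := mod_cast ZMod.prime_ne_zero p 2 (by lia)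
  have h3 : (3 : ZMod p) ≠ 0 := mod_cast ZMod.prime_ne_zero p 3 (by lia)
  have h6 : (6 : ZMod p) ≠ 0 := by
    convert mul_ne_zero h2 h3 using 1
    norm_num
  have hcard : 4 < Cardinal.mk (ZMod p) := by
    rw [Cardinal.mk_fintype, ZMod.card]
    exact_mod_cast hp
  have hne : (pairingPoly f h).map φ ≠ 0 := by
    rw [map_pairingPoly]
    exact pairingPoly_ne_zero hcard h6 hf hh
  have hle := dens_map_eval_eq_zero_le φ (ZMod.ringHom_surjective φ) hne
    (totalDegree_pairingPoly_le f h)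
  rw [ZMod.card] at hle
  simpa using (NNRat.cast_le (K := ℝ)).mpr hle

lemma norm_orbSum_rsmul_pow_le (hp : 5 ≤ p) {f h : BQ (ZMod (p ^ k))}
    (hf : f.map φ ≠ ⟨0, 0, 0, 0, 0⟩) (hh : h.map φ ≠ ⟨0, 0, 0, 0, 0⟩) {j : ℕ} {B : ℝ} (hB : 0 ≤ B)
    (hmean : ∀ m, φ m ≠ 0 → ‖unitSquareMean (p ^ k) ((p : ZMod (p ^ k)) ^ j * m)‖ ≤ B) :
    ‖orbSum (p ^ k) f (h.rsmul ((p : ZMod (p ^ k)) ^ j))‖ ≤ B + 7 * (p : ℝ)⁻¹ := by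
  let bad : Finset (Fin 4 → ZMod (p ^ k)) := {v | φ (MvPolynomial.eval v (pairingPoly f h)) = 0}
  have hgood (v) (hv : v ∈ invertibleMatrices (p ^ k)) (hvb : v ∉ bad) :
      ‖unitSquareMean (p ^ k) (pairing (f.twist (matOfVec v))
        (h.rsmul ((p : ZMod (p ^ k)) ^ j)))‖ ≤ B := by
    rw [pairing_twist_rsmul]
    refine hmean _ ?_
    have hdet : IsUnit (Ring.inverse (matOfVec v).det) := (mem_invertibleMatrices.mp hv).ringInverse
    rw [map_mul]
    refine mul_ne_zero ((isUnit_iff_map_ne_zero φ _).mp (hdet.pow 2)) ?_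
    simpa [bad, eval_pairingPoly] using hvb
  refine (norm_orbSum_le_add_dens_div bad hB hgood).trans ?_
  have hp5 : (5 : ℝ) ≤ p := mod_cast hp
  have hdet : 0 < 1 - 2 / (p : ℝ) := by
    rw [sub_pos, div_lt_one (by linarith)]
    linarith
  gcongr
  calc _ ≤ (4 / p) / (1 - 2 / (p : ℝ)) :=
        div_le_div₀ (by positivity) (dens_map_eval_pairingPoly_eq_zero_le φ hp hf hh) hdet
          (one_sub_le_dens_invertibleMatrices φ)
    _ = 4 / (1 - 2 / (p : ℝ)) * (p : ℝ)⁻¹ := by ring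
    _ ≤ 7 * (p : ℝ)⁻¹ := by
        gcongr
        rw [div_le_iff₀ hdet]
        have : 2 / (p : ℝ) ≤ 2 / 5 := by gcongr
        linarith

lemma norm_orbSum_le_of_lt_five (hp : p < 5) (f h : BQ (ZMod (p ^ k))) :
    ‖orbSum (p ^ k) f h‖ ≤ 4 * (p : ℝ)⁻¹ := by
  have hp0 : (0 : ℝ) < p := mod_cast (Fact.out : p.Prime).pos
  have hp4 : (p : ℝ) ≤ 4 := mod_cast Nat.le_of_lt_succ hp
  calc _ ≤ 1 := norm_orbSum_le_one _ f h
    _ ≤ 4 * (p : ℝ)⁻¹ := (one_le_div hp0).mpr hp4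

lemma norm_orbSum_rsmul_pow_pred_le {f h : BQ (ZMod (p ^ k))} (hf : f.map φ ≠ ⟨0, 0, 0, 0, 0⟩)
    (hh : h.map φ ≠ ⟨0, 0, 0, 0, 0⟩) :
    ‖orbSum (p ^ k) f (h.rsmul ((p : ZMod (p ^ k)) ^ (k - 1)))‖ ≤ 10 * (√p)⁻¹ := by
  have hsqrt : (p : ℝ)⁻¹ ≤ (√p)⁻¹ := by
    have hp1 : (1 : ℝ) ≤ p := mod_cast (Fact.out : p.Prime).one_le
    gcongr
    exact Real.sqrt_le_self_iff.mpr (.inr hp1)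
  rcases lt_or_ge p 5 with hp | hp
  · linarith [norm_orbSum_le_of_lt_five hp f (h.rsmul ((p : ZMod (p ^ k)) ^ (k - 1))),
      inv_nonneg.mpr (Real.sqrt_nonneg p)]
  · linarith [norm_orbSum_rsmul_pow_le φ hp hf hh (by positivity)
      fun _ ↦ norm_unitSquareMean_pow_pred_mul_le φ (by lia)]

lemma norm_orbSum_le_of_not_exists_eq_rsmul {f h : BQ (ZMod (p ^ k))}
    (hf : f.map φ ≠ ⟨0, 0, 0, 0, 0⟩)
    (hh : ¬∃ g : BQ (ZMod (p ^ k)), h = g.rsmul ((p : ZMod (p ^ k)) ^ (k - 1))) :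
    ‖orbSum (p ^ k) f h‖ ≤ 7 * (p : ℝ)⁻¹ := by
  rcases lt_or_ge p 5 with hp | hp
  · exact (norm_orbSum_le_of_lt_five hp f h).trans (by gcongr; norm_num)
  · obtain ⟨j, hj, h₀, rfl, hprim⟩ := BQ.exists_eq_rsmul_pow hh
    have hmean (m) (hm : φ m ≠ 0) : ‖unitSquareMean (p ^ k) ((p : ZMod (p ^ k)) ^ j * m)‖ ≤ 0 := by
      rw [unitSquareMean_pow_mul_eq_zero φ (by lia) (by lia) hm, norm_zero]
    simpa only [zero_add] using norm_orbSum_rsmul_pow_le φ hp hf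
      (BQ.map_ne_zero_of_not_exists_eq_rsmul φ hprim) le_rfl hmean

end PrimePowers

/-- Uniform bounds for orbital exponential sums on `V(ℤ/p^kℤ)`,
for `f` not a multiple of `p`:  `G ≪ 1` always, `G ≪ p^{−1/2}` for
`0 ≠ h ∈ p^{k−1}V`, and `G ≪ p^{−1}` for `h ∉ p^{k−1}V`. -/
theorem orbital_sum_bounds :
    ∃ C : ℝ, 0 < C ∧
      ∀ (p : ℕ), p.Prime → ∀ (k : ℕ), 1 ≤ k → ∀ f h : BQ (ZMod (p ^ k)),
        (¬ ∃ g : BQ (ZMod (p ^ k)), f = g.rsmul (p : ZMod (p ^ k))) →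
        (‖orbSum (p ^ k) f h‖ ≤ C) ∧
        (h ≠ ⟨0, 0, 0, 0, 0⟩ →
          (∃ h' : BQ (ZMod (p ^ k)), h = h'.rsmul ((p : ZMod (p ^ k)) ^ (k - 1))) →
          ‖orbSum (p ^ k) f h‖ ≤ C * (p : ℝ) ^ (-(1 : ℝ) / 2)) ∧
        ((¬ ∃ h' : BQ (ZMod (p ^ k)), h = h'.rsmul ((p : ZMod (p ^ k)) ^ (k - 1))) →
          ‖orbSum (p ^ k) f h‖ ≤ C * (p : ℝ) ^ (-(1 : ℝ))) := by
  refine ⟨10, by norm_num, fun p hp k hk f h hf ↦ ?_⟩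
  have : Fact p.Prime := ⟨hp⟩
  let φ := ZMod.castHom (dvd_pow_self p (by lia : k ≠ 0)) (ZMod p)
  have hfφ := BQ.map_ne_zero_of_not_exists_eq_rsmul φ hf
  have hsqrt : (p : ℝ) ^ (-(1 : ℝ) / 2) = (√p)⁻¹ := by
    rw [neg_div, Real.rpow_neg p.cast_nonneg, Real.sqrt_eq_rpow]
  rw [hsqrt, Real.rpow_neg_one]
  refine ⟨(norm_orbSum_le_one _ f h).trans (by norm_num), ?_, fun hh ↦ ?_⟩
  · rintro hh ⟨h', rfl⟩
    exact norm_orbSum_rsmul_pow_pred_le φ hfφ (BQ.map_ne_zero_of_rsmul_pow_pred_ne_zero φ hh)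
  · exact (norm_orbSum_le_of_not_exists_eq_rsmul φ hfφ hh).trans (by gcongr; norm_num)

end BQPaper
end
end
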